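/- arXiv:1702.08258 — 2 statements merged into one kernel-verified Lean document; each statement's English description precedes it below -/
import Mathlib

section
/- Let m, m_t, m_r be positive integers with m_t ≤ m_r and m_t + m_r ≤ m. Then for every s ≥ 0, the ergodic capacity of the MIMO Jacobi fading channel satisfies the lower bound E[ln det(I_{m_t} + s·HᴴH)] ≥ m_t · ln(1 + s · exp( −(1/m_t) · Σ_{j=0}^{m_t−1} Σ_{k=0}^{m−m_r−1} 1/(m_r + k − j) )), where the expectation is over the Haar probability measure on the unitary group U(m). -/
open MeasureTheory Matrix

/-- Borel measurable-space structure on the unitary group `U(m)`. -/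
noncomputable instance (m : ℕ) : MeasurableSpace (Matrix.unitaryGroup (Fin m) ℂ) := borel _

instance (m : ℕ) : BorelSpace (Matrix.unitaryGroup (Fin m) ℂ) := ⟨rfl⟩

/-- The MIMO Jacobi fading channel matrix: the upper-left `mr × mt` block of a
unitary `m × m` matrix `U`. -/
noncomputable def jacobiH (m mt mr : ℕ) (hr : mr ≤ m) (ht : mt ≤ m)
    (U : Matrix.unitaryGroup (Fin m) ℂ) : Matrix (Fin mr) (Fin mt) ℂ :=
  (U : Matrix (Fin m) (Fin m) ℂ).submatrix (Fin.castLE hr) (Fin.castLE ht)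

/-- The ergodic capacity `E[ln det (I + s · Hᴴ H)]` of the MIMO Jacobi fading channel,
the expectation being taken with respect to the measure `μ` on the unitary group. -/
noncomputable def ergodicCapacity (m mt mr : ℕ) (hr : mr ≤ m) (ht : mt ≤ m) (s : ℝ)
    (μ : Measure (Matrix.unitaryGroup (Fin m) ℂ)) : ℝ :=
  ∫ U, Real.log ((Matrix.det ((1 : Matrix (Fin mt) (Fin mt) ℂ) +
      (s : ℂ) • ((jacobiH m mt mr hr ht U)ᴴ * jacobiH m mt mr hr ht U))).re) ∂μ

/-! Both Jensen inequalities go the right way for the convex function `x ↦ log (1 + s eˣ)`: over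
the eigenvalues of `HᴴH`, and then over `U`, they reduce the claim to
`E[-log det HᴴH] ≤ ∑ⱼ ∑ₖ 1 / (m_r + k - j)`.

Enlarge the `r × n` block `H` one row at a time. By left invariance, the first `r + 1` rows may
be multiplied by an independent Haar element `V` of `U(r + 1)`; writing the `(r + 1) × n` block
as `W T` with `W` having orthonormal columns and `T` square, the inner average over `V` splits
off `-log det TᴴT`. Hence deleting a row of an `(r + 1) × n` block costs at most the mean of
`-log det HᴴH` for the `r × n` block of `V`. As only one row of `V` is missing, that Gram
determinant is one minus the squared norm of a piece of a row, i.e. the squared norm of the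
remaining `r + 1 - n` entries; as `V⁻¹ = Vᴴ` is again Haar distributed, this is the Gram
determinant of a block of size `(r + 1 - n) × 1`, and the same recursion on single columns
reduces it to the case `n = 1`, that is to `E[-log (1 - |V a c|²)] ≤ 1 / k` on `U(k + 1)`. The
moments of `|V a c|²` are those of the law `Beta(1, k)`, whose Stein identity comes from
differentiating along plane rotations. -/

namespace JacobiFading

open scoped ENNReal ComplexOrder

section InvariantMeasure

variable {G : Type*} [Group G] [MeasurableSpace G] [MeasurableMul₂ G]

theorem eq_of_isMulLeftInvariant_of_isMulRightInvariant (μ ν : Measure G)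
    [IsProbabilityMeasure μ] [IsProbabilityMeasure ν] [μ.IsMulLeftInvariant]
    [ν.IsMulRightInvariant] : μ = ν := by
  refine Measure.ext_of_lintegral _ fun f hf => ?_
  calc ∫⁻ y, f y ∂μ = ∫⁻ x, ∫⁻ y, f (x * y) ∂μ ∂ν := by simp [lintegral_mul_left_eq_self f]
    _ = ∫⁻ y, ∫⁻ x, f (x * y) ∂ν ∂μ := lintegral_lintegral_swap (by fun_prop)
    _ = ∫⁻ x, f x ∂ν := by simp [lintegral_mul_right_eq_self f]

variable (μ : Measure G) [IsProbabilityMeasure μ] [μ.IsMulLeftInvariant]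

theorem lintegral_lintegral_mul_left {H : Type*} [MeasurableSpace H] (ν : Measure H)
    [IsProbabilityMeasure ν] {φ : H → G} (hφ : Measurable φ) {f : G → ℝ≥0∞} (hf : Measurable f) :
    ∫⁻ x, ∫⁻ h, f (φ h * x) ∂ν ∂μ = ∫⁻ x, f x ∂μ := by
  rw [lintegral_lintegral_swap (by fun_prop)]
  simp [lintegral_mul_left_eq_self f]

variable [MeasurableInv G]

theorem isInvInvariant_of_isMulLeftInvariant : μ.IsInvInvariant := by
  have : IsProbabilityMeasure μ.inv :=
    Measure.isProbabilityMeasure_map measurable_inv.aemeasurable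
  exact ⟨(eq_of_isMulLeftInvariant_of_isMulRightInvariant μ μ.inv).symm⟩

theorem isMulRightInvariant_of_isMulLeftInvariant : μ.IsMulRightInvariant := by
  have := isInvInvariant_of_isMulLeftInvariant μ
  rw [← Measure.inv_eq_self μ]
  infer_instance

end InvariantMeasure

section CompactGroup

variable {G E : Type*} [TopologicalSpace G] [CompactSpace G] [MeasurableSpace G] [BorelSpace G]
  [NormedAddCommGroup E] (μ : Measure G) [IsFiniteMeasure μ]

theorem integrable_of_continuous {F : G → E} (hF : Continuous F) : Integrable F μ :=
  hF.integrable_of_hasCompactSupport (.of_compactSpace F)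

theorem integral_eq_zero_of_hasDerivAt_mul_left [Group G] [ContinuousMul G] [NormedSpace ℝ E]
    [μ.IsMulLeftInvariant] {F F' : G → E} (hF : Continuous F) (hF' : Continuous F') (γ : ℝ → G)
    (hderiv : ∀ x θ, HasDerivAt (fun θ => F (γ θ * x)) (F' (γ θ * x)) θ) :
    ∫ x, F' x ∂μ = 0 := by
  obtain ⟨C, hC⟩ := isCompact_univ.exists_bound_of_continuousOn hF'.continuousOn
  have hint {H : G → E} (hH : Continuous H) (θ : ℝ) : Integrable (fun x => H (γ θ * x)) μ :=
    integrable_of_continuous μ (hH.comp (continuous_const_mul _))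
  have hder := (hasDerivAt_integral_of_dominated_loc_of_deriv_le (x₀ := (0 : ℝ))
    (s := Set.univ) (bound := fun _ => C) Filter.univ_mem
    (.of_forall fun θ => (hint hF θ).aestronglyMeasurable) (hint hF 0)
    (hint hF' 0).aestronglyMeasurable (ae_of_all _ fun x _ _ => hC _ trivial)
    (integrable_const C) (ae_of_all _ fun x θ _ => hderiv x θ)).2
  simp only [integral_mul_left_eq_self F, integral_mul_left_eq_self F'] at hder
  exact hder.unique (hasDerivAt_const _ _)

theorem exists_isProbabilityMeasure_isMulLeftInvariant (G : Type*) [TopologicalSpace G] [Group G]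
    [IsTopologicalGroup G] [CompactSpace G] [MeasurableSpace G] [BorelSpace G] :
    ∃ ν : Measure G, IsProbabilityMeasure ν ∧ ν.IsMulLeftInvariant :=
  ⟨Measure.haarMeasure ⊤, ⟨Measure.haarMeasure_self⟩, inferInstance⟩

end CompactGroup

section UnitaryGroup

variable {ι 𝕜 : Type*} [Fintype ι] [DecidableEq ι] [RCLike 𝕜]

instance : SecondCountableTopology (unitaryGroup ι 𝕜) :=
  inferInstanceAs (SecondCountableTopology {A : ι → ι → 𝕜 // A ∈ unitaryGroup ι 𝕜})

instance : CompactSpace (unitaryGroup ι 𝕜) := by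
  refine isCompact_iff_compactSpace.mp <| .of_isClosed_subset
    (isCompact_univ_pi fun _ => isCompact_univ_pi fun _ => isCompact_closedBall (0 : 𝕜) 1)
    ?_ fun A hA i _ j _ => by simpa using entry_norm_bound_of_unitary hA i j
  have : (unitaryGroup ι 𝕜 : Set (Matrix ι ι 𝕜)) = {A | A * star A = 1} :=
    Set.ext fun A => mem_unitaryGroup_iff
  rw [this]
  exact isClosed_eq (by fun_prop) continuous_const

theorem sum_norm_sq_col_of_unitary (U : unitaryGroup ι 𝕜) (j : ι) : ∑ i, ‖U.1 i j‖ ^ 2 = 1 := by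
  have h := congrFun₂ (UnitaryGroup.star_mul_self U) j j
  simp only [mul_apply, star_apply, one_apply_eq, RCLike.star_def, RCLike.conj_mul] at h
  exact_mod_cast h

theorem sum_norm_sq_row_of_unitary (U : unitaryGroup ι 𝕜) (i : ι) : ∑ j, ‖U.1 i j‖ ^ 2 = 1 := by
  simpa using sum_norm_sq_col_of_unitary U⁻¹ i

@[fun_prop]
theorem continuous_unitary_apply (i j : ι) : Continuous fun U : unitaryGroup ι 𝕜 => U.1 i j :=
  continuous_subtype_val.matrix_elem i j

theorem exists_unitary_mul_isUpperTriangular [LinearOrder ι] [LocallyFiniteOrderBot ι]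
    [WellFoundedLT ι] (A : Matrix ι ι 𝕜) :
    ∃ (Q : unitaryGroup ι 𝕜) (R : Matrix ι ι 𝕜), R.IsUpperTriangular ∧ A = Q * R := by
  let e := EuclideanSpace.basisFun ι 𝕜
  let v : ι → EuclideanSpace 𝕜 ι := fun j => WithLp.toLp 2 (A.col j)
  have hdim : Module.finrank 𝕜 (EuclideanSpace 𝕜 ι) = Fintype.card ι := by simp
  let b := InnerProductSpace.gramSchmidtOrthonormalBasis hdim v
  refine ⟨⟨e.toBasis.toMatrix b, by
      convert e.toMatrix_orthonormalBasis_mem_unitary b⟩, b.toBasis.toMatrix v,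
    InnerProductSpace.gramSchmidtOrthonormalBasis_inv_isUpperTriangular hdim v, ?_⟩
  have hchange : e.toBasis.toMatrix b * b.toBasis.toMatrix v = e.toBasis.toMatrix v := by
    rw [← b.coe_toBasis, Module.Basis.toMatrix_mul_toMatrix]
  refine .trans ?_ hchange.symm
  ext i j
  simp [e, v, Module.Basis.toMatrix_apply]

end UnitaryGroup

section UnitaryExtension

variable {ι κ n 𝕜 : Type*} [Fintype κ] [DecidableEq κ] [RCLike 𝕜] {f : ι → κ}

theorem conjTranspose_submatrix_one_mul (f : ι → κ) (A : Matrix κ n 𝕜) :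
    ((1 : Matrix κ κ 𝕜).submatrix id f)ᴴ * A = A.submatrix f id := by
  ext i j
  simp [mul_apply, one_apply]

theorem conjTranspose_submatrix_one_mul_self [DecidableEq ι] (hf : f.Injective) :
    ((1 : Matrix κ κ 𝕜).submatrix id f)ᴴ * (1 : Matrix κ κ 𝕜).submatrix id f = 1 := by
  rw [conjTranspose_submatrix_one_mul, submatrix_submatrix, Function.id_comp, Function.comp_id,
    submatrix_one _ hf]

variable [Fintype ι] [DecidableEq ι]

/-- The embedding `U(ι) → U(κ)` along an injection `f : ι → κ`: `unitaryExtend hf V` acts as `V` on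
the coordinates in the range of `f` and fixes the others. If `J` is the `0`-`1` matrix of `f`, it is
`1 + J (V - 1) Jᴴ`. -/
def unitaryExtend (hf : f.Injective) (V : unitaryGroup ι 𝕜) : unitaryGroup κ 𝕜 :=
  ⟨1 + (1 : Matrix κ κ 𝕜).submatrix id f * (V.1 - 1) * ((1 : Matrix κ κ 𝕜).submatrix id f)ᴴ, by
    have hJ := conjTranspose_submatrix_one_mul_self (𝕜 := 𝕜) hf
    set J : Matrix κ ι 𝕜 := (1 : Matrix κ κ 𝕜).submatrix id f
    have hV : V.1ᴴ * V.1 = 1 := mem_unitaryGroup_iff'.mp V.2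
    have hprod : J * (V.1ᴴ - 1) * Jᴴ * (J * (V.1 - 1) * Jᴴ)
        = J * ((V.1ᴴ - 1) * (V.1 - 1)) * Jᴴ := by
      simp only [Matrix.mul_assoc, ← Matrix.mul_assoc Jᴴ J, hJ, Matrix.one_mul]
    have hexpand : (V.1ᴴ - 1) * (V.1 - 1) = -(V.1ᴴ - 1) - (V.1 - 1) := by
      rw [sub_mul, mul_sub, hV]
      simp
    have hstar : (1 + J * (V.1 - 1) * Jᴴ)ᴴ = 1 + J * (V.1ᴴ - 1) * Jᴴ := by
      simp [conjTranspose_mul, Matrix.mul_assoc]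
    rw [mem_unitaryGroup_iff', star_eq_conjTranspose, hstar, add_mul, mul_add, mul_add, hprod,
      hexpand]
    simp only [Matrix.mul_sub, Matrix.sub_mul, Matrix.mul_neg, Matrix.neg_mul, mul_one, one_mul]
    abel⟩

theorem continuous_unitaryExtend (hf : f.Injective) :
    Continuous (unitaryExtend hf : unitaryGroup ι 𝕜 → unitaryGroup κ 𝕜) := by
  unfold unitaryExtend
  fun_prop

theorem submatrix_unitaryExtend_mul (hf : f.Injective) (V : unitaryGroup ι 𝕜)
    (U : unitaryGroup κ 𝕜) :
    (unitaryExtend hf V * U).1.submatrix f id = V.1 * U.1.submatrix f id := by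
  simp only [← conjTranspose_submatrix_one_mul, unitaryExtend, Submonoid.coe_mul, Matrix.add_mul,
    Matrix.mul_add, Matrix.mul_assoc,
    ← Matrix.mul_assoc ((1 : Matrix κ κ 𝕜).submatrix id f)ᴴ ((1 : Matrix κ κ 𝕜).submatrix id f),
    conjTranspose_submatrix_one_mul_self hf]
  simp [Matrix.sub_mul]

end UnitaryExtension

section SteinIdentity

open scoped InnerProductSpace

/-- The one-parameter family of plane rotations with phase `ω`: the curve
`θ ↦ !![cos θ, ω sin θ; -star ω sin θ, cos θ]` in `U(2)`. -/
noncomputable def planeRotation (ω : unitary ℂ) (θ : ℝ) : unitaryGroup (Fin 2) ℂ :=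
  ⟨!![(Real.cos θ : ℂ), ω * Real.sin θ; -star (ω : ℂ) * Real.sin θ, (Real.cos θ : ℂ)], by
    have hω : (ω : ℂ) * star (ω : ℂ) = 1 := Unitary.coe_mul_star_self ω
    have htrig : (Real.sin θ : ℂ) ^ 2 + (Real.cos θ : ℂ) ^ 2 = 1 := by
      exact_mod_cast Real.sin_sq_add_cos_sq θ
    have hconj : (!![(Real.cos θ : ℂ), ω * Real.sin θ; -star (ω : ℂ) * Real.sin θ, Real.cos θ])ᴴ
        = !![(Real.cos θ : ℂ), -ω * Real.sin θ; star (ω : ℂ) * Real.sin θ, Real.cos θ] := by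
      ext i j
      fin_cases i <;> fin_cases j <;> simp [-Complex.ofReal_cos, -Complex.ofReal_sin]
    rw [mem_unitaryGroup_iff, star_eq_conjTranspose, hconj, mul_fin_two, one_fin_two]
    congr 1
    simp only [vecCons_inj, and_true]
    refine ⟨⟨?_, ?_⟩, ?_, ?_⟩
    · linear_combination htrig + (Real.sin θ : ℂ) ^ 2 * hω
    · ring
    · ring
    · linear_combination htrig + (Real.sin θ : ℂ) ^ 2 * hω⟩

section Rotation

theorem injective_pair {α : Type*} {a b : α} (hab : a ≠ b) : (![a, b] : Fin 2 → α).Injective := by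
  simp [Function.Injective, Fin.forall_fin_two, hab, hab.symm]

variable {κ : Type*} [Fintype κ] [DecidableEq κ] {a b : κ}

theorem unitaryExtend_planeRotation_mul_apply (hab : a ≠ b) (ω : unitary ℂ) (θ : ℝ)
    (U : unitaryGroup κ ℂ) (c : κ) :
    (unitaryExtend (injective_pair hab) (planeRotation ω θ) * U).1 a c
        = Real.cos θ * U.1 a c + ω * Real.sin θ * U.1 b c ∧
      (unitaryExtend (injective_pair hab) (planeRotation ω θ) * U).1 b c
        = -star (ω : ℂ) * Real.sin θ * U.1 a c + Real.cos θ * U.1 b c := by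
  have h i := congrFun₂ (submatrix_unitaryExtend_mul (injective_pair hab) (planeRotation ω θ) U) i c
  simp only [mul_apply, Fin.sum_univ_two] at h
  exact ⟨h 0, h 1⟩

theorem hasDerivAt_unitaryExtend_planeRotation_mul (hab : a ≠ b) (ω : unitary ℂ)
    (U : unitaryGroup κ ℂ) (c : κ) (θ : ℝ) :
    HasDerivAt (fun θ => (unitaryExtend (injective_pair hab) (planeRotation ω θ) * U).1 a c)
        (ω * (unitaryExtend (injective_pair hab) (planeRotation ω θ) * U).1 b c) θ ∧
      HasDerivAt (fun θ => (unitaryExtend (injective_pair hab) (planeRotation ω θ) * U).1 b c)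
        (-star (ω : ℂ) * (unitaryExtend (injective_pair hab) (planeRotation ω θ) * U).1 a c) θ := by
  have hω : (ω : ℂ) * star (ω : ℂ) = 1 := Unitary.coe_mul_star_self ω
  have hcos := (Real.hasDerivAt_cos θ).ofReal_comp
  have hsin := (Real.hasDerivAt_sin θ).ofReal_comp
  simp only [unitaryExtend_planeRotation_mul_apply hab]
  constructor
  · refine ((hcos.mul_const (U.1 a c)).add ((hsin.const_mul (ω : ℂ)).mul_const _)).congr_deriv ?_
    push_cast
    linear_combination Complex.sin θ * U.1 a c * hω
  · refine (((hsin.const_mul (-star (ω : ℂ))).mul_const _).add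
      (hcos.mul_const (U.1 b c))).congr_deriv ?_
    push_cast
    linear_combination Complex.sin θ * U.1 b c * hω

end Rotation

theorem inner_sq_add_inner_I_mul_sq (z w : ℂ) :
    ⟪z, w⟫_ℝ ^ 2 + ⟪z, Complex.I * w⟫_ℝ ^ 2 = ‖z‖ ^ 2 * ‖w‖ ^ 2 := by
  simp only [Complex.inner, Complex.sq_norm, Complex.normSq_apply, Complex.mul_re, Complex.mul_im,
    Complex.conj_re, Complex.conj_im, Complex.I_re, Complex.I_im]
  ring

variable {m : ℕ} (μ : Measure (unitaryGroup (Fin m) ℂ)) [IsFiniteMeasure μ] [μ.IsMulLeftInvariant]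
  {a b : Fin m} {g g' : ℝ → ℝ}

-- Invariance under the rotations of phase `ω` in the plane of the rows `a` and `b`, applied to
-- `g(|z|²) ⟪z, ω w⟫` with `z = U a c` and `w = U b c`.
theorem integral_deriv_mul_inner_sq_add (hg : ∀ t, HasDerivAt g (g' t) t) (hg' : Continuous g')
    (hab : a ≠ b) (c : Fin m) (ω : unitary ℂ) :
    ∫ U, (2 * (g' (‖U.1 a c‖ ^ 2) * ⟪U.1 a c, ω * U.1 b c⟫_ℝ ^ 2)
      + g (‖U.1 a c‖ ^ 2) * (‖U.1 b c‖ ^ 2 - ‖U.1 a c‖ ^ 2)) ∂μ = 0 := by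
  have hgc : Continuous g := continuous_iff_continuousAt.mpr fun t => (hg t).continuousAt
  refine integral_eq_zero_of_hasDerivAt_mul_left μ
    (F := fun U => g (‖U.1 a c‖ ^ 2) * ⟪U.1 a c, ω * U.1 b c⟫_ℝ) (by fun_prop) (by fun_prop)
    (fun θ => unitaryExtend (injective_pair hab) (planeRotation ω θ)) fun U θ => ?_
  obtain ⟨hz, hw⟩ := hasDerivAt_unitaryExtend_planeRotation_mul hab ω U c θ
  refine (((hg _).comp θ hz.norm_sq).mul (hz.inner ℝ (hw.const_mul (ω : ℂ)))).congr_deriv ?_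
  rw [Function.comp_apply]
  generalize (unitaryExtend (injective_pair hab) (planeRotation ω θ) * U).1 a c = z
  generalize (unitaryExtend (injective_pair hab) (planeRotation ω θ) * U).1 b c = w
  have hω : (ω : ℂ) * (-star (ω : ℂ) * z) = -z := by
    linear_combination (-z) * Unitary.coe_mul_star_self ω
  have hnorm : ‖(ω : ℂ) * w‖ = ‖w‖ := by simp
  rw [hω, inner_neg_right, real_inner_self_eq_norm_sq, real_inner_self_eq_norm_sq, hnorm]
  ring

theorem integral_deriv_mul_norm_sq_add (hg : ∀ t, HasDerivAt g (g' t) t) (hg' : Continuous g')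
    (hab : a ≠ b) (c : Fin m) :
    ∫ U, (g' (‖U.1 a c‖ ^ 2) * ‖U.1 a c‖ ^ 2 * ‖U.1 b c‖ ^ 2
      + g (‖U.1 a c‖ ^ 2) * (‖U.1 b c‖ ^ 2 - ‖U.1 a c‖ ^ 2)) ∂μ = 0 := by
  have hgc : Continuous g := continuous_iff_continuousAt.mpr fun t => (hg t).continuousAt
  have h1 := integral_deriv_mul_inner_sq_add μ hg hg' hab c 1
  have hI := integral_deriv_mul_inner_sq_add μ hg hg' hab c ⟨Complex.I, by simp [Unitary.mem_iff]⟩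
  have hsum := congrArg₂ (· + ·) h1 hI
  rw [add_zero, ← integral_add (integrable_of_continuous μ (by fun_prop))
    (integrable_of_continuous μ (by fun_prop))] at hsum
  refine (mul_eq_zero.mp ?_).resolve_left (two_ne_zero (α := ℝ))
  rw [← hsum, ← integral_const_mul]
  refine integral_congr_ae (.of_forall fun U => ?_)
  simp only [OneMemClass.coe_one, one_mul]
  linear_combination (-2 * g' (‖U.1 a c‖ ^ 2)) * inner_sq_add_inner_I_mul_sq (U.1 a c) (U.1 b c)

-- This is the Stein identity of the `Beta(1, m - 1)` law of `|U a c|²`.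
theorem integral_stein_norm_sq (hg : ∀ t, HasDerivAt g (g' t) t) (hg' : Continuous g')
    (a c : Fin m) :
    ∫ U, (g' (‖U.1 a c‖ ^ 2) * ‖U.1 a c‖ ^ 2 + g (‖U.1 a c‖ ^ 2)) * (1 - ‖U.1 a c‖ ^ 2) ∂μ
      = (m - 1) * ∫ U, g (‖U.1 a c‖ ^ 2) * ‖U.1 a c‖ ^ 2 ∂μ := by
  have hgc : Continuous g := continuous_iff_continuousAt.mpr fun t => (hg t).continuousAt
  have hzero : ∫ U, ∑ b ∈ Finset.univ.erase a,
      (g' (‖U.1 a c‖ ^ 2) * ‖U.1 a c‖ ^ 2 * ‖U.1 b c‖ ^ 2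
        + g (‖U.1 a c‖ ^ 2) * (‖U.1 b c‖ ^ 2 - ‖U.1 a c‖ ^ 2)) ∂μ = 0 := by
    rw [integral_finsetSum _ fun b _ => integrable_of_continuous μ (by fun_prop)]
    exact Finset.sum_eq_zero fun b hb =>
      integral_deriv_mul_norm_sq_add μ hg hg' (Finset.ne_of_mem_erase hb).symm c
  rw [← sub_eq_zero, ← hzero, ← integral_const_mul,
    ← integral_sub (integrable_of_continuous μ (by fun_prop))
      (integrable_of_continuous μ (by fun_prop))]
  refine integral_congr_ae (.of_forall fun U => ?_)
  have hcol := Finset.add_sum_erase _ (fun b => ‖U.1 b c‖ ^ 2) (Finset.mem_univ a)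
  rw [sum_norm_sq_col_of_unitary, ← eq_sub_iff_add_eq'] at hcol
  have hm : 1 ≤ m := a.pos
  simp only [Finset.sum_add_distrib, ← Finset.mul_sum, Finset.sum_sub_distrib, hcol,
    Finset.sum_const, Finset.card_erase_of_mem (Finset.mem_univ a), Finset.card_univ,
    Fintype.card_fin, nsmul_eq_mul, Nat.cast_sub hm, Nat.cast_one]
  ring

end SteinIdentity

section NegLog

open Filter Topology

/-- `-log t` with values in `[0, ∞]`, truncated below at `0`; unlike `Real.log`, it takes the value
`∞` at `t = 0`. -/
noncomputable def negLog (t : ℝ) : ℝ≥0∞ :=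
  if t ≤ 0 then ⊤ else ENNReal.ofReal (-Real.log t)

@[fun_prop]
theorem measurable_negLog : Measurable negLog :=
  .ite measurableSet_Iic measurable_const (by fun_prop)

@[simp]
theorem negLog_one : negLog 1 = 0 := by simp [negLog]

theorem negLog_eq_top_iff {t : ℝ} : negLog t = ⊤ ↔ t ≤ 0 := by simp [negLog]

theorem neg_toReal_negLog_le_log {t : ℝ} (ht : 0 < t) : -(negLog t).toReal ≤ Real.log t := by
  rw [negLog, if_neg ht.not_ge, ENNReal.toReal_ofReal']
  exact neg_le.mp (le_max_left _ _)

theorem negLog_mul_le {x y : ℝ} (hx : 0 ≤ x) (hy : 0 ≤ y) :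
    negLog (x * y) ≤ negLog x + negLog y := by
  rcases hx.eq_or_lt with rfl | hx
  · simp [negLog]
  rcases hy.eq_or_lt with rfl | hy
  · simp [negLog]
  rw [negLog, negLog, negLog, if_neg (mul_pos hx hy).not_ge, if_neg hx.not_ge, if_neg hy.not_ge,
    Real.log_mul hx.ne' hy.ne', neg_add]
  exact ENNReal.ofReal_add_le

theorem negLog_one_sub_eq_tsum {t : ℝ} (h0 : 0 ≤ t) (h1 : t ≤ 1) :
    negLog (1 - t) = ∑' j : ℕ, ENNReal.ofReal (t ^ (j + 1) / (j + 1)) := by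
  rcases h1.eq_or_lt with rfl | h1
  · have hdiv : ¬ Summable fun j : ℕ => (1 : ℝ) ^ (j + 1) / (j + 1) := by
      simpa using mt (summable_nat_add_iff (f := fun j : ℕ => 1 / (j : ℝ)) 1).mp
        Real.not_summable_one_div_natCast
    rw [sub_self, negLog, if_pos le_rfl]
    by_contra htop
    exact hdiv <| (ENNReal.summable_toReal (Ne.symm htop)).congr fun j => by
      rw [ENNReal.toReal_ofReal (by positivity)]
  · have hsum := Real.hasSum_pow_div_log_of_abs_lt_one (abs_lt.mpr ⟨by linarith, h1⟩)
    rw [negLog, if_neg (by linarith), ← hsum.tsum_eq,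
      ENNReal.ofReal_tsum_of_nonneg (fun j => by positivity) hsum.summable]

end NegLog

section EntryBound

variable {m : ℕ} (μ : Measure (unitaryGroup (Fin m) ℂ)) [μ.IsMulLeftInvariant]

theorem add_one_mul_integral_norm_pow [IsFiniteMeasure μ] (a c : Fin m) (j : ℕ) :
    ((j : ℝ) + 1) * ∫ U, ((‖U.1 a c‖ ^ 2) ^ j * (1 - ‖U.1 a c‖ ^ 2)) ∂μ
      = ((m : ℝ) - 1) * ∫ U, (‖U.1 a c‖ ^ 2) ^ (j + 1) ∂μ := by
  have h := integral_stein_norm_sq μ (g := fun t => t ^ j) (fun t => hasDerivAt_pow j t)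
    (by fun_prop) a c
  simp only [pow_succ _ j]
  rw [← h, ← integral_const_mul]
  refine integral_congr_ae (.of_forall fun U => ?_)
  rcases j with _ | j
  · simp
  · simp only [Nat.add_sub_cancel]
    push_cast
    ring

variable [IsProbabilityMeasure μ]

theorem mul_sum_integral_norm_pow_div_le_one (a c : Fin m) (n : ℕ) :
    ((m : ℝ) - 1) * ∑ j ∈ Finset.range n, ∫ U, (‖U.1 a c‖ ^ 2) ^ (j + 1) / (j + 1) ∂μ ≤ 1 := by
  have hint {F : unitaryGroup (Fin m) ℂ → ℝ} (hF : Continuous F) := integrable_of_continuous μ hF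
  calc ((m : ℝ) - 1) * ∑ j ∈ Finset.range n, ∫ U, (‖U.1 a c‖ ^ 2) ^ (j + 1) / (j + 1) ∂μ
      = ∑ j ∈ Finset.range n, ∫ U, (‖U.1 a c‖ ^ 2) ^ j * (1 - ‖U.1 a c‖ ^ 2) ∂μ := by
        rw [Finset.mul_sum]
        refine Finset.sum_congr rfl fun j _ => ?_
        rw [integral_div, ← mul_div_assoc, ← add_one_mul_integral_norm_pow,
          mul_div_cancel_left₀ _ (Nat.cast_add_one_ne_zero j)]
    _ = ∫ U, (1 - (‖U.1 a c‖ ^ 2) ^ n) ∂μ := by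
        rw [← integral_finsetSum _ fun j _ => hint (by fun_prop)]
        simp only [← Finset.sum_mul, geom_sum_mul_neg]
    _ ≤ ∫ _, (1 : ℝ) ∂μ :=
        integral_mono (hint (by fun_prop)) (hint continuous_const) fun U =>
          sub_le_self _ (by positivity)
    _ = 1 := by simp

theorem lintegral_negLog_one_sub_norm_sq_le {k : ℕ} (hk : 0 < k)
    (μ : Measure (unitaryGroup (Fin (k + 1)) ℂ)) [IsProbabilityMeasure μ] [μ.IsMulLeftInvariant]
    (a c : Fin (k + 1)) :
    ∫⁻ U, negLog (1 - ‖U.1 a c‖ ^ 2) ∂μ ≤ ENNReal.ofReal (1 / k) := by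
  have hterm (j : ℕ) : ∫⁻ U, ENNReal.ofReal ((‖U.1 a c‖ ^ 2) ^ (j + 1) / (j + 1)) ∂μ
      = ENNReal.ofReal (∫ U, (‖U.1 a c‖ ^ 2) ^ (j + 1) / (j + 1) ∂μ) :=
    (ofReal_integral_eq_lintegral_ofReal (integrable_of_continuous μ (by fun_prop))
      (.of_forall fun U => by positivity)).symm
  have hseries (U : unitaryGroup (Fin (k + 1)) ℂ) : negLog (1 - ‖U.1 a c‖ ^ 2)
      = ∑' j : ℕ, ENNReal.ofReal ((‖U.1 a c‖ ^ 2) ^ (j + 1) / (j + 1)) :=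
    negLog_one_sub_eq_tsum (by positivity)
      (pow_le_one₀ (norm_nonneg _) (entry_norm_bound_of_unitary U.2 a c))
  simp only [hseries]
  rw [lintegral_tsum fun j => (Continuous.measurable (by fun_prop)).ennreal_ofReal.aemeasurable]
  simp only [hterm]
  refine ENNReal.tsum_le_of_sum_range_le fun n => ?_
  rw [← ENNReal.ofReal_sum_of_nonneg fun j _ => integral_nonneg fun U => by positivity]
  refine ENNReal.ofReal_le_ofReal ((le_div_iff₀' (by positivity)).mpr ?_)
  simpa using mul_sum_integral_norm_pow_div_le_one μ a c n

end EntryBound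

section GramDet

variable {ι n : Type*} [Fintype ι] [Fintype n] [DecidableEq n]

/-- The Gram determinant `det (Aᴴ A)` of the columns of `A`, as a real number. -/
noncomputable def gramDet (A : Matrix ι n ℂ) : ℝ := (Aᴴ * A).det.re

theorem gramDet_nonneg (A : Matrix ι n ℂ) : 0 ≤ gramDet A :=
  (Complex.nonneg_iff.mp (posSemidef_conjTranspose_mul_self A).det_nonneg).1

theorem det_conjTranspose_mul_self (A : Matrix ι n ℂ) : (Aᴴ * A).det = gramDet A :=
  Complex.eq_re_of_ofReal_le (r := 0) (by
    simpa using (posSemidef_conjTranspose_mul_self A).det_nonneg)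

theorem gramDet_mul (A : Matrix ι n ℂ) (T : Matrix n n ℂ) :
    gramDet (A * T) = gramDet A * gramDet T := by
  rw [← Complex.ofReal_inj, Complex.ofReal_mul]
  simp only [← det_conjTranspose_mul_self, conjTranspose_mul, det_mul, Matrix.mul_assoc]
  rw [← Matrix.mul_assoc Aᴴ, det_mul]
  ring

theorem gramDet_eq_sum_norm_sq [Unique n] (A : Matrix ι n ℂ) :
    gramDet A = ∑ i, ‖A i default‖ ^ 2 := by
  rw [← Complex.ofReal_inj, ← det_conjTranspose_mul_self, det_unique]
  simp [mul_apply, Complex.conj_mul']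

theorem gramDet_submatrix_unitary [DecidableEq ι] {κ : Type*} [Fintype κ] (U : unitaryGroup ι ℂ)
    {a : κ → ι} (ha : a.Bijective) {g : n → ι} (hg : g.Injective) :
    gramDet (U.1.submatrix a g) = 1 := by
  have hU : U.1ᴴ * U.1 = 1 := mem_unitaryGroup_iff'.mp U.2
  rw [gramDet, conjTranspose_submatrix, ← submatrix_mul _ _ _ _ _ ha, hU, submatrix_one _ hg,
    det_one, Complex.one_re]

theorem gramDet_submatrix_castSucc {r : ℕ} (U : unitaryGroup (Fin (r + 1)) ℂ) {g : n → Fin (r + 1)}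
    (hg : g.Injective) :
    gramDet (U.1.submatrix Fin.castSucc g) = 1 - ∑ i, ‖U.1 (Fin.last r) (g i)‖ ^ 2 := by
  let w : Matrix (Fin 1) n ℂ := U.1.submatrix (fun _ => Fin.last r) g
  have hU : U.1ᴴ * U.1 = 1 := mem_unitaryGroup_iff'.mp U.2
  have hgram : (U.1.submatrix Fin.castSucc g)ᴴ * U.1.submatrix Fin.castSucc g = 1 - wᴴ * w := by
    rw [eq_sub_iff_add_eq, ← submatrix_one (α := ℂ) g hg, ← hU]
    ext i j
    simp [w, mul_apply, Fin.sum_univ_castSucc]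
  rw [← Complex.ofReal_inj, ← det_conjTranspose_mul_self, hgram, det_one_sub_mul_comm]
  simp [w, mul_apply, Complex.mul_conj']

@[fun_prop]
theorem continuous_gramDet : Continuous (gramDet : Matrix ι n ℂ → ℝ) := by
  unfold gramDet
  fun_prop

theorem exists_eq_submatrix_unitary_mul {p n : ℕ} (h : n ≤ p) (X : Matrix (Fin p) (Fin n) ℂ) :
    ∃ (W : unitaryGroup (Fin p) ℂ) (T : Matrix (Fin n) (Fin n) ℂ),
      X = W.1.submatrix id (Fin.castLE h) * T := by
  obtain ⟨W, R, hR, hWR⟩ := exists_unitary_mul_isUpperTriangular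
    (of fun i j : Fin p => if hj : j < n then X i ⟨j, hj⟩ else 0)
  refine ⟨W, R.submatrix (Fin.castLE h) (Fin.castLE h), ?_⟩
  ext i j
  have hij := congrFun₂ hWR i (Fin.castLE h j)
  simp only [of_apply, Fin.val_castLE, Fin.is_lt, dite_true, mul_apply] at hij
  rw [hij, mul_apply]
  refine (Fintype.sum_of_injective _ (Fin.castLE_injective h) _ _ (fun k hk => ?_)
    fun _ => rfl).symm
  rw [Fin.range_castLE, Set.mem_ofPred_eq, not_lt] at hk
  exact mul_eq_zero_of_right _ (hR (show Fin.castLE h j < k from j.2.trans_le hk))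

end GramDet

section GramIntegral

variable {m n r : ℕ}

/-- The mean of `-log` of the Gram determinant of the block of a random unitary matrix with rows
`a` and columns `g`, as an element of `[0, ∞]`. -/
noncomputable def meanNegLogGram {ι κ : Type*} [Fintype ι] [Fintype κ] [DecidableEq κ]
    (μ : Measure (unitaryGroup (Fin m) ℂ)) (a : ι → Fin m) (g : κ → Fin m) : ℝ≥0∞ :=
  ∫⁻ U, negLog (gramDet (U.1.submatrix a g)) ∂μ

theorem measurable_negLog_gramDet_submatrix {ι κ : Type*} [Fintype ι] [Fintype κ] [DecidableEq κ]
    (a : ι → Fin m) (g : κ → Fin m) :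
    Measurable fun U : unitaryGroup (Fin m) ℂ => negLog (gramDet (U.1.submatrix a g)) :=
  measurable_negLog.comp (Continuous.measurable (by fun_prop))

theorem lintegral_negLog_gramDet_mul_le (ν : Measure (unitaryGroup (Fin (r + 1)) ℂ))
    [IsProbabilityMeasure ν] [ν.IsMulLeftInvariant] (h : n ≤ r + 1)
    (X : Matrix (Fin (r + 1)) (Fin n) ℂ) :
    ∫⁻ V, negLog (gramDet ((V.1 * X).submatrix Fin.castSucc id)) ∂ν
      ≤ negLog (gramDet X) + meanNegLogGram ν Fin.castSucc (Fin.castLE h) := by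
  have := isMulRightInvariant_of_isMulLeftInvariant ν
  obtain ⟨W, T, rfl⟩ := exists_eq_submatrix_unitary_mul h X
  have hinj := Fin.castLE_injective h
  have hV (V : unitaryGroup (Fin (r + 1)) ℂ) :
      (V.1 * (W.1.submatrix id (Fin.castLE h) * T)).submatrix Fin.castSucc id
        = (V * W).1.submatrix Fin.castSucc (Fin.castLE h) * T := by
    rw [← Matrix.mul_assoc]
    rfl
  simp only [hV, gramDet_mul, gramDet_submatrix_unitary W Function.bijective_id hinj, one_mul]
  calc ∫⁻ V, negLog (gramDet ((V * W).1.submatrix Fin.castSucc (Fin.castLE h)) * gramDet T) ∂ν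
      ≤ ∫⁻ V, (negLog (gramDet ((V * W).1.submatrix Fin.castSucc (Fin.castLE h)))
          + negLog (gramDet T)) ∂ν :=
        lintegral_mono fun V => negLog_mul_le (gramDet_nonneg _) (gramDet_nonneg _)
    _ = negLog (gramDet T) + meanNegLogGram ν Fin.castSucc (Fin.castLE h) := by
        rw [lintegral_add_right _ measurable_const, lintegral_const, measure_univ, mul_one,
          add_comm, meanNegLogGram, lintegral_mul_right_eq_self
            (fun V => negLog (gramDet (V.1.submatrix Fin.castSucc (Fin.castLE h)))) W]

variable (μ : Measure (unitaryGroup (Fin m) ℂ)) [IsProbabilityMeasure μ] [μ.IsMulLeftInvariant]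

-- The rows `a` of `U` are averaged over `U(r + 1)`, which does not change the law of `U`.
theorem meanNegLogGram_comp_castSucc_le (ν : Measure (unitaryGroup (Fin (r + 1)) ℂ))
    [IsProbabilityMeasure ν] [ν.IsMulLeftInvariant] (h : n ≤ r + 1) {a : Fin (r + 1) → Fin m}
    (ha : a.Injective) (g : Fin n → Fin m) :
    meanNegLogGram μ (a ∘ Fin.castSucc) g
      ≤ meanNegLogGram μ a g + meanNegLogGram ν Fin.castSucc (Fin.castLE h) := by
  calc meanNegLogGram μ (a ∘ Fin.castSucc) g
      = ∫⁻ U, ∫⁻ V, negLog (gramDet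
          ((unitaryExtend ha V * U).1.submatrix (a ∘ Fin.castSucc) g)) ∂ν ∂μ :=
        (lintegral_lintegral_mul_left μ ν (continuous_unitaryExtend ha).measurable
          (measurable_negLog_gramDet_submatrix (a ∘ Fin.castSucc) g)).symm
    _ = ∫⁻ U, ∫⁻ V, negLog (gramDet
          ((V.1 * U.1.submatrix a g).submatrix Fin.castSucc id)) ∂ν ∂μ := by
        refine lintegral_congr fun U => lintegral_congr fun V => ?_
        congr 2
        exact congrArg (·.submatrix Fin.castSucc g) (submatrix_unitaryExtend_mul ha V U)
    _ ≤ ∫⁻ U, (negLog (gramDet (U.1.submatrix a g))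
          + meanNegLogGram ν Fin.castSucc (Fin.castLE h)) ∂μ :=
        lintegral_mono fun U => lintegral_negLog_gramDet_mul_le ν h _
    _ = meanNegLogGram μ a g + meanNegLogGram ν Fin.castSucc (Fin.castLE h) := by
        rw [lintegral_add_right _ measurable_const, lintegral_const, measure_univ, mul_one]
        rfl

theorem meanNegLogGram_le_sum_of_forall {B : ℕ → ℝ≥0∞}
    (hB : ∀ (k : ℕ) (hk : n ≤ k) (ν : Measure (unitaryGroup (Fin (k + 1)) ℂ))
      [IsProbabilityMeasure ν] [ν.IsMulLeftInvariant],
      meanNegLogGram ν Fin.castSucc (Fin.castLE (hk.trans k.le_succ)) ≤ B k)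
    (hn : n ≤ r) {a : Fin r → Fin m} (ha : a.Injective) {g : Fin n → Fin m} (hg : g.Injective) :
    meanNegLogGram μ a g ≤ ∑ k ∈ Finset.Ico r m, B k := by
  have hrm : r ≤ m := by simpa using Fintype.card_le_of_injective a ha
  induction hd : m - r generalizing r with
  | zero =>
    obtain rfl : r = m := by omega
    simp [meanNegLogGram, gramDet_submatrix_unitary _ (Finite.injective_iff_bijective.mp ha) hg]
  | succ d ih =>
    obtain ⟨x, hx⟩ : ∃ x, x ∉ Set.range a := by
      by_contra! hsurj
      have := Fintype.card_le_of_surjective a hsurj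
      simp only [Fintype.card_fin] at this
      omega
    obtain ⟨ν, _, _⟩ :=
      exists_isProbabilityMeasure_isMulLeftInvariant (unitaryGroup (Fin (r + 1)) ℂ)
    have hsnoc := Fin.snoc_injective_of_injective ha hx
    have hext := meanNegLogGram_comp_castSucc_le μ ν (hn.trans r.le_succ) hsnoc g
    rw [Fin.snoc_comp_castSucc] at hext
    rw [Finset.sum_eq_sum_Ico_succ_bot (by omega), add_comm]
    exact hext.trans (add_le_add (ih (by omega) hsnoc (by omega) (by omega)) (hB r hn ν))

end GramIntegral

section GramBound

variable {m n r : ℕ} (μ : Measure (unitaryGroup (Fin m) ℂ)) [IsProbabilityMeasure μ]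
  [μ.IsMulLeftInvariant]

theorem meanNegLogGram_one_le (hr : 1 ≤ r) {a : Fin r → Fin m} (ha : a.Injective)
    (g : Fin 1 → Fin m) :
    meanNegLogGram μ a g ≤ ∑ k ∈ Finset.Ico r m, ENNReal.ofReal (1 / k) := by
  refine meanNegLogGram_le_sum_of_forall μ (fun k hk ν _ _ => ?_) hr ha
    (Function.injective_of_subsingleton g)
  simp only [meanNegLogGram, gramDet_submatrix_castSucc _ (Fin.castLE_injective _),
    Fin.sum_univ_one]
  exact lintegral_negLog_one_sub_norm_sq_le hk ν _ _

theorem gramDet_submatrix_castSucc_castLE {q : ℕ} (U : unitaryGroup (Fin (n + q + 1)) ℂ)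
    (h : n ≤ n + q + 1) :
    gramDet (U.1.submatrix Fin.castSucc (Fin.castLE h))
      = ∑ i : Fin (q + 1), ‖U.1 (Fin.last (n + q)) (Fin.natAdd n i)‖ ^ 2 := by
  have hrow := (Fin.sum_univ_add
    fun i : Fin (n + (q + 1)) => ‖U.1 (Fin.last (n + q)) i‖ ^ 2).symm.trans
      (sum_norm_sq_row_of_unitary U _)
  rw [gramDet_submatrix_castSucc U (Fin.castLE_injective h)]
  exact sub_eq_of_eq_add' hrow.symm

-- Since `V⁻¹ = Vᴴ` has the law of `V`, the row in `gramDet_submatrix_castSucc_castLE` may be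
-- replaced by a column, whose squared norm is a Gram determinant of size one.
theorem meanNegLogGram_castSucc_castLE_le (hnr : n ≤ r)
    (ν : Measure (unitaryGroup (Fin (r + 1)) ℂ)) [IsProbabilityMeasure ν] [ν.IsMulLeftInvariant] :
    meanNegLogGram ν Fin.castSucc (Fin.castLE (hnr.trans r.le_succ))
      ≤ ∑ i ∈ Finset.Ico (r + 1 - n) (r + 1), ENNReal.ofReal (1 / i) := by
  obtain ⟨q, rfl⟩ := Nat.exists_eq_add_of_le hnr
  have := isInvInvariant_of_isMulLeftInvariant ν
  let tail : Fin (q + 1) → Fin (n + q + 1) := Fin.natAdd n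
  let lastCol : Fin 1 → Fin (n + q + 1) := fun _ => Fin.last (n + q)
  have hdual (V : unitaryGroup (Fin (n + q + 1)) ℂ) :
      gramDet (V.1.submatrix Fin.castSucc (Fin.castLE (hnr.trans (Nat.le_succ _))))
        = gramDet (V⁻¹.1.submatrix tail lastCol) := by
    rw [gramDet_submatrix_castSucc_castLE, gramDet_eq_sum_norm_sq]
    simp [tail, lastCol]
  calc meanNegLogGram ν Fin.castSucc (Fin.castLE (hnr.trans (Nat.le_succ _)))
      = ∫⁻ V, negLog (gramDet (V⁻¹.1.submatrix tail lastCol)) ∂ν :=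
        lintegral_congr fun V => congrArg negLog (hdual V)
    _ = meanNegLogGram ν tail lastCol :=
        lintegral_inv_eq_self (μ := ν) fun V => negLog (gramDet (V.1.submatrix tail lastCol))
    _ ≤ ∑ i ∈ Finset.Ico (q + 1) (n + q + 1), ENNReal.ofReal (1 / i) :=
        meanNegLogGram_one_le ν q.succ_pos (Fin.natAdd_injective _ _) lastCol
    _ = _ := by rw [show n + q + 1 - n = q + 1 by omega]

theorem sum_Ico_sum_Ico_one_div_eq (hnr : n ≤ r) :
    ∑ k ∈ Finset.Ico r m, ∑ i ∈ Finset.Ico (k + 1 - n) (k + 1), (1 / i : ℝ)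
      = ∑ j ∈ Finset.range n, ∑ k ∈ Finset.range (m - r), 1 / ((r : ℝ) + k - j) := by
  rw [Finset.sum_comm (s := Finset.range n), Finset.sum_Ico_eq_sum_range]
  refine Finset.sum_congr rfl fun k _ => ?_
  have hcard : r + k + 1 - (r + k + 1 - n) = n := by omega
  rw [Finset.sum_Ico_eq_sum_range, ← Finset.sum_range_reflect, hcard]
  refine Finset.sum_congr rfl fun j hj => ?_
  have hj := Finset.mem_range.mp hj
  have hidx : r + k + 1 - n + (n - 1 - j) = r + k - j := by omega
  rw [hidx, Nat.cast_sub (by omega), Nat.cast_add]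

theorem meanNegLogGram_le (hnr : n ≤ r) {a : Fin r → Fin m} (ha : a.Injective)
    {g : Fin n → Fin m} (hg : g.Injective) :
    meanNegLogGram μ a g ≤ ENNReal.ofReal
      (∑ j ∈ Finset.range n, ∑ k ∈ Finset.range (m - r), 1 / ((r : ℝ) + k - j)) := by
  refine (meanNegLogGram_le_sum_of_forall μ
    (fun k hk ν _ _ => meanNegLogGram_castSucc_castLE_le hk ν) hnr ha hg).trans_eq ?_
  rw [← sum_Ico_sum_Ico_one_div_eq hnr, ENNReal.ofReal_sum_of_nonneg fun k _ =>
    Finset.sum_nonneg fun i _ => by positivity]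
  exact Finset.sum_congr rfl fun k _ =>
    (ENNReal.ofReal_sum_of_nonneg fun i _ => by positivity).symm

end GramBound

section Jensen

variable {s : ℝ}

theorem monotone_log_one_add_mul_exp (hs : 0 ≤ s) :
    Monotone fun x => Real.log (1 + s * Real.exp x) := fun _ _ hxy =>
  Real.log_le_log (by positivity) (by gcongr)

theorem convexOn_log_one_add_mul_exp (hs : 0 ≤ s) :
    ConvexOn ℝ Set.univ fun x => Real.log (1 + s * Real.exp x) := by
  have hderiv (x : ℝ) : HasDerivAt (fun x => Real.log (1 + s * Real.exp x))
      (1 - 1 / (1 + s * Real.exp x)) x := by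
    have hpos : 1 + s * Real.exp x ≠ 0 := by positivity
    convert (((Real.hasDerivAt_exp x).const_mul s).const_add 1).log hpos using 1
    field_simp
    ring
  refine Monotone.convexOn_univ_of_deriv (fun x => (hderiv x).differentiableAt) fun x y hxy => ?_
  rw [(hderiv x).deriv, (hderiv y).deriv]
  gcongr

theorem det_one_add_smul_eq_prod_eigenvalues {n : Type*} [Fintype n] [DecidableEq n]
    {B : Matrix n n ℂ} (hB : B.IsHermitian) (s : ℝ) :
    det (1 + (s : ℂ) • B) = ((∏ i, (1 + s * hB.eigenvalues i) : ℝ) : ℂ) := by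
  let φ := Unitary.conjStarAlgAut ℂ (Matrix n n ℂ) hB.eigenvectorUnitary
  have hB' : 1 + (s : ℂ) • B
      = φ (1 + (s : ℂ) • diagonal (RCLike.ofReal ∘ hB.eigenvalues)) := by
    rw [map_add, map_one, map_smul, ← hB.spectral_theorem]
  have hdiag : 1 + (s : ℂ) • diagonal (RCLike.ofReal ∘ hB.eigenvalues)
      = diagonal fun i => ((1 + s * hB.eigenvalues i : ℝ) : ℂ) := by
    rw [← diagonal_one, ← diagonal_smul, diagonal_add]
    simp
  rw [hB', hdiag, Unitary.conjStarAlgAut_apply,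
    det_conj_of_mul_eq_one (mem_unitaryGroup_iff.mp hB.eigenvectorUnitary.2)
      (mem_unitaryGroup_iff'.mp hB.eigenvectorUnitary.2), det_diagonal,
    Complex.ofReal_prod]

variable {ι n : Type*} [Fintype ι] [Fintype n] [DecidableEq n]

theorem re_det_one_add_smul_pos (A : Matrix ι n ℂ) (hs : 0 ≤ s) :
    0 < (det (1 + (s : ℂ) • (Aᴴ * A))).re := by
  have hpsd := posSemidef_conjTranspose_mul_self A
  rw [det_one_add_smul_eq_prod_eigenvalues hpsd.isHermitian, Complex.ofReal_re]
  exact Finset.prod_pos fun i _ =>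
    add_pos_of_pos_of_nonneg one_pos (mul_nonneg hs (hpsd.eigenvalues_nonneg i))

theorem card_mul_log_one_add_mul_exp_log_gramDet_le [Nonempty n] {A : Matrix ι n ℂ}
    (hA : 0 < gramDet A) (hs : 0 ≤ s) :
    Fintype.card n * Real.log (1 + s * Real.exp (Real.log (gramDet A) / Fintype.card n))
      ≤ Real.log (det (1 + (s : ℂ) • (Aᴴ * A))).re := by
  have hpsd := posSemidef_conjTranspose_mul_self A
  set ev := hpsd.isHermitian.eigenvalues with hev
  have hprod : gramDet A = ∏ i, ev i := by
    rw [gramDet, hpsd.isHermitian.det_eq_prod_eigenvalues]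
    norm_cast
  have hne (i : n) : ev i ≠ 0 := Finset.prod_ne_zero_iff.mp (hprod ▸ hA.ne') i (Finset.mem_univ i)
  have hpos (i : n) : 0 < ev i := (hpsd.eigenvalues_nonneg i).lt_of_ne' (hne i)
  have hcard : (0 : ℝ) < Fintype.card n := by exact_mod_cast Fintype.card_pos
  have hjensen := (convexOn_log_one_add_mul_exp hs).map_sum_le (t := Finset.univ)
    (w := fun _ : n => (Fintype.card n : ℝ)⁻¹) (p := fun i => Real.log (ev i))
    (fun _ _ => by positivity) (by simp [hcard.ne']) fun _ _ => Set.mem_univ _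
  simp only [smul_eq_mul, ← Finset.mul_sum, Real.exp_log (hpos _)] at hjensen
  rw [det_one_add_smul_eq_prod_eigenvalues hpsd.isHermitian, Complex.ofReal_re, ← hev,
    Real.log_prod fun i _ => (add_pos_of_pos_of_nonneg one_pos (mul_nonneg hs (hpos i).le)).ne',
    hprod, Real.log_prod fun i _ => hne i, div_eq_inv_mul]
  exact (le_inv_mul_iff₀ hcard).mp hjensen

section Integral

variable {Ω : Type*} [MeasurableSpace Ω] {μ : Measure Ω} {Y : Ω → ℝ}

theorem integrable_log_one_add_mul_exp [IsFiniteMeasure μ] (hs : 0 ≤ s)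
    (hY : AEStronglyMeasurable Y μ) (hY0 : ∀ ω, Y ω ≤ 0) :
    Integrable (fun ω => Real.log (1 + s * Real.exp (Y ω))) μ := by
  refine .of_bound (C := Real.log (1 + s * Real.exp 0)) ?_ (.of_forall fun ω => ?_)
  · exact ((monotone_log_one_add_mul_exp hs).measurable.comp_aemeasurable
      hY.aemeasurable).aestronglyMeasurable
  · rw [Real.norm_of_nonneg (Real.log_nonneg (le_add_of_nonneg_right (by positivity)))]
    exact monotone_log_one_add_mul_exp hs (hY0 ω)

variable [IsProbabilityMeasure μ]

theorem log_one_add_mul_exp_le_integral (hs : 0 ≤ s) (hY : Integrable Y μ) (hY0 : ∀ ω, Y ω ≤ 0)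
    {c : ℝ} (hc : c ≤ ∫ ω, Y ω ∂μ) :
    Real.log (1 + s * Real.exp c) ≤ ∫ ω, Real.log (1 + s * Real.exp (Y ω)) ∂μ := by
  have hconv := convexOn_log_one_add_mul_exp hs
  exact (monotone_log_one_add_mul_exp hs hc).trans <|
    hconv.map_integral_le (hconv.continuousOn isOpen_univ) isClosed_univ
      (.of_forall fun _ => Set.mem_univ _) hY (integrable_log_one_add_mul_exp hs hY.1 hY0)

theorem card_mul_log_one_add_mul_exp_le_integral_log_det [Nonempty n] {A : Ω → Matrix ι n ℂ}
    (hA : Measurable fun ω => negLog (gramDet (A ω))) (hs : 0 ≤ s)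
    (hint : Integrable (fun ω => Real.log (det (1 + (s : ℂ) • ((A ω)ᴴ * A ω))).re) μ)
    {S : ℝ} (hS : 0 ≤ S) (hle : ∫⁻ ω, negLog (gramDet (A ω)) ∂μ ≤ ENNReal.ofReal S) :
    (Fintype.card n : ℝ) * Real.log (1 + s * Real.exp (-(1 / (Fintype.card n : ℝ)) * S))
      ≤ ∫ ω, Real.log (det (1 + (s : ℂ) • ((A ω)ᴴ * A ω))).re ∂μ := by
  set N := (Fintype.card n : ℝ)
  have hN : -(1 / N) ≤ 0 := neg_nonpos.mpr (by positivity)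
  let Y : Ω → ℝ := fun ω => -(1 / N) * (negLog (gramDet (A ω))).toReal
  have hfin := ne_top_of_le_ne_top ENNReal.ofReal_ne_top hle
  have hae := ae_lt_top hA hfin
  have hY : Integrable Y μ :=
    (integrable_toReal_of_lintegral_ne_top hA.aemeasurable hfin).const_mul _
  have hY0 (ω : Ω) : Y ω ≤ 0 := mul_nonpos_of_nonpos_of_nonneg hN ENNReal.toReal_nonneg
  have hmean : -(1 / N) * S ≤ ∫ ω, Y ω ∂μ := by
    rw [integral_const_mul, integral_toReal hA.aemeasurable hae]
    exact mul_le_mul_of_nonpos_left (ENNReal.toReal_le_of_le_ofReal hS hle) hN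
  have hpointwise : ∀ᵐ ω ∂μ, N * Real.log (1 + s * Real.exp (Y ω))
      ≤ Real.log (det (1 + (s : ℂ) • ((A ω)ᴴ * A ω))).re := by
    filter_upwards [hae] with ω hω
    have hpos : 0 < gramDet (A ω) := not_le.mp (negLog_eq_top_iff.not.mp hω.ne)
    have hYlog : Y ω ≤ Real.log (gramDet (A ω)) / N := by
      dsimp only [Y]
      rw [neg_mul_comm, one_div_mul_eq_div]
      gcongr
      exact neg_toReal_negLog_le_log hpos
    exact le_trans (by gcongr) (card_mul_log_one_add_mul_exp_log_gramDet_le hpos hs)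
  calc N * Real.log (1 + s * Real.exp (-(1 / N) * S))
      ≤ N * ∫ ω, Real.log (1 + s * Real.exp (Y ω)) ∂μ := by
        gcongr
        exact log_one_add_mul_exp_le_integral hs hY hY0 hmean
    _ = ∫ ω, N * Real.log (1 + s * Real.exp (Y ω)) ∂μ := (integral_const_mul _ _).symm
    _ ≤ _ :=
        integral_mono_ae ((integrable_log_one_add_mul_exp hs hY.1 hY0).const_mul N) hint hpointwise

end Integral

end Jensen

theorem sum_range_sum_range_one_div_nonneg {n r : ℕ} (hnr : n ≤ r) (q : ℕ) :
    0 ≤ ∑ j ∈ Finset.range n, ∑ k ∈ Finset.range q, 1 / ((r : ℝ) + k - j) := by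
  refine Finset.sum_nonneg fun j hj => Finset.sum_nonneg fun k _ => one_div_nonneg.mpr ?_
  have hjr : (j : ℝ) ≤ r := by exact_mod_cast (Finset.mem_range.mp hj).le.trans hnr
  linarith [k.cast_nonneg (α := ℝ)]

end JacobiFading

open JacobiFading in
theorem jacobi_ergodic_capacity_lower_bound_general
    {m mt mr : ℕ} (hmt : 0 < mt) (h1 : mt ≤ mr) (hr : mr ≤ m)
    (μ : Measure (Matrix.unitaryGroup (Fin m) ℂ)) [μ.IsMulLeftInvariant] [IsProbabilityMeasure μ]
    {s : ℝ} (hs : 0 ≤ s) :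
    (mt : ℝ) * Real.log (1 + s * Real.exp (-(1 / (mt : ℝ)) *
        ∑ j ∈ Finset.range mt, ∑ k ∈ Finset.range (m - mr),
          1 / ((mr : ℝ) + k - j)))
      ≤ ergodicCapacity m mt mr hr (h1.trans hr) s μ := by
  have := Fin.pos_iff_nonempty.mp hmt
  have hcont : Continuous fun U : Matrix.unitaryGroup (Fin m) ℂ =>
      Real.log (det (1 + (s : ℂ) •
        ((jacobiH m mt mr hr (h1.trans hr) U)ᴴ * jacobiH m mt mr hr (h1.trans hr) U))).re := by
    refine Continuous.log ?_ fun U => (re_det_one_add_smul_pos _ hs).ne'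
    unfold jacobiH
    fun_prop
  have hbound := card_mul_log_one_add_mul_exp_le_integral_log_det
    (measurable_negLog_gramDet_submatrix (Fin.castLE hr) (Fin.castLE (h1.trans hr))) hs
    (integrable_of_continuous μ hcont) (sum_range_sum_range_one_div_nonneg h1 _)
    (meanNegLogGram_le μ h1 (Fin.castLE_injective hr) (Fin.castLE_injective (h1.trans hr)))
  rwa [Fintype.card_fin] at hbound

/-- **Lower bound on the ergodic capacity of the MIMO Jacobi fading channel.**
If `mt ≤ mr` and `mt + mr ≤ m`, then for every SNR `s ≥ 0`,
`E[ln det (I + s · Hᴴ H)] ≥ mt · ln (1 + s · exp (−(1/mt) · Σ_j Σ_k 1/(mr + k − j)))`,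
the expectation being over the Haar probability measure on the unitary group `U(m)`. -/
theorem jacobi_ergodic_capacity_lower_bound
    (m mt mr : ℕ) (hm : 0 < m) (hmt : 0 < mt) (hmr : 0 < mr)
    (h1 : mt ≤ mr) (h2 : mt + mr ≤ m)
    (μ : Measure (Matrix.unitaryGroup (Fin m) ℂ))
    [μ.IsHaarMeasure] [IsProbabilityMeasure μ]
    (s : ℝ) (hs : 0 ≤ s) :
    (mt : ℝ) * Real.log (1 + s * Real.exp (-(1 / (mt : ℝ)) *
        ∑ j ∈ Finset.range mt, ∑ k ∈ Finset.range (m - mr),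
          1 / ((mr : ℝ) + k - j)))
      ≤ ergodicCapacity m mt mr (le_trans (Nat.le_add_left mr mt) h2)
          (le_trans (Nat.le_add_right mt mr) h2) s μ := by
  exact jacobi_ergodic_capacity_lower_bound_general hmt h1 _ μ hs
end

section
/- Let m, m_t, m_r be positive integers with m_t ≤ m_r and m_t + m_r ≤ m. Then the ergodic capacity C(s) = E[ln det(I_{m_t} + s·HᴴH)] of the MIMO Jacobi fading channel satisfies lim_{s→∞} ( C(s) − m_t·ln s ) = − Σ_{j=0}^{m_t−1} Σ_{k=0}^{m−m_r−1} 1/(m_r + k − j); that is, in the high-SNR regime the ergodic capacity equals m_t·ln(s) − Σ_{j=0}^{m_t−1} Σ_{k=0}^{m−m_r−1} 1/(m_r+k−j) + o(1). -/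
open MeasureTheory Matrix

/-!
Let `x₁, …, xₙ` be independent standard complex Gaussian vectors in a space of dimension `d ≥ n`.
Adding a vector to a family multiplies its Gram determinant by the squared distance to the span,
and half of that squared distance is a Gamma variable of integer shape, whose logarithm has mean
`-γ + harmonic k`. Hence the expected logarithm of the Gram determinant is a sum of harmonic
numbers determined by `d`.

The first `mr` rows of a unitary matrix `U` map Gaussian vectors of `ℂᵐ` to Gaussian vectors of
`ℂ^mr`, while right invariance of Haar measure gives the ratio of the two Gram determinants the
law of `det (Hᴴ H)`. So `E log det (Hᴴ H)` is a difference of harmonic sums. Finally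
`log det (1 + s A) - n log s` decreases to `log det A` as `s → ∞`, so dominated convergence applies.
-/

open ProbabilityTheory

section LogGamma

lemma integral_pow_mul_exp_neg_mul_log (n : ℕ) :
    ∫ t in Set.Ioi (0 : ℝ), t ^ n * (Real.exp (-t) * Real.log t) =
      n.factorial * (-Real.eulerMascheroniConstant + harmonic n) := by
  have hn : 0 < ((n : ℂ) + 1).re := by
    simp only [Complex.add_re, Complex.natCast_re, Complex.one_re]
    positivity
  have hGamma : Complex.Gamma =ᶠ[nhds ((n : ℂ) + 1)] Complex.GammaIntegral := by
    filter_upwards [(Complex.continuous_re.isOpen_preimage _ isOpen_Ioi).mem_nhds hn] with s hs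
    exact Complex.Gamma_eq_integral hs
  have hderiv := ((Complex.hasDerivAt_GammaIntegral hn).congr_of_eventuallyEq hGamma).unique
    (Complex.hasDerivAt_Gamma_nat n)
  have hreal : ∀ t : ℝ, (t : ℂ) ^ ((n : ℂ) + 1 - 1) * (Real.log t * Real.exp (-t)) =
      ((t ^ n * (Real.exp (-t) * Real.log t) : ℝ) : ℂ) := by
    intro t
    rw [add_sub_cancel_right, Complex.cpow_natCast]
    push_cast
    ring
  simp_rw [hreal, integral_complex_ofReal] at hderiv
  exact_mod_cast hderiv

lemma eulerMascheroniConstant_ne_harmonic (n : ℕ) :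
    Real.eulerMascheroniConstant ≠ harmonic n := by
  rcases Nat.eq_zero_or_pos n with rfl | hn
  · simpa using (one_half_pos.trans Real.one_half_lt_eulerMascheroniConstant).ne'
  · have h1 : (1 : ℚ) ≤ harmonic n := by
      simpa [harmonic] using Finset.single_le_sum (f := fun i : ℕ => ((i + 1 : ℕ) : ℚ)⁻¹)
        (fun i _ => by positivity) (Finset.mem_range.2 hn)
    have h1' : (1 : ℝ) ≤ harmonic n := by exact_mod_cast h1
    linarith [Real.eulerMascheroniConstant_lt_two_thirds]

lemma integral_gammaMeasure {a r : ℝ} (ha : 0 < a) (hr : 0 < r) (f : ℝ → ℝ) :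
    ∫ t, f t ∂gammaMeasure a r =
      r ^ a / Real.Gamma a * ∫ t in Set.Ioi 0, t ^ (a - 1) * (Real.exp (-(r * t)) * f t) := by
  have hsupport : ∀ t ∉ Set.Ici (0 : ℝ), gammaPDFReal a r t * f t = 0 := fun t ht => by
    rw [gammaPDFReal, if_neg (by simpa using ht), zero_mul]
  rw [gammaMeasure, integral_withDensity_eq_integral_toReal_smul (f := gammaPDF a r)
    (measurable_gammaPDFReal a r).ennreal_ofReal (.of_forall fun _ => ENNReal.ofReal_lt_top)]
  simp_rw [gammaPDF, ENNReal.toReal_ofReal (gammaPDFReal_nonneg ha hr _), smul_eq_mul]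
  rw [← setIntegral_eq_integral_of_forall_compl_eq_zero hsupport, integral_Ici_eq_integral_Ioi,
    ← integral_const_mul]
  refine setIntegral_congr_fun measurableSet_Ioi fun t (ht : 0 < t) => ?_
  simp only [gammaPDFReal, if_pos ht.le]
  ring

lemma integral_log_gammaMeasure (n : ℕ) :
    ∫ t, Real.log t ∂gammaMeasure (n + 1) 1 = -Real.eulerMascheroniConstant + harmonic n := by
  rw [integral_gammaMeasure (by positivity) one_pos, Real.one_rpow, Real.Gamma_nat_eq_factorial]
  simp_rw [add_sub_cancel_right, Real.rpow_natCast, one_mul]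
  rw [integral_pow_mul_exp_neg_mul_log, one_div, inv_mul_cancel_left₀ (by positivity)]

lemma integrable_log_gammaMeasure (n : ℕ) :
    Integrable Real.log (gammaMeasure (n + 1) 1) := by
  refine Integrable.of_integral_ne_zero ?_
  rw [integral_log_gammaMeasure, neg_add_eq_sub, sub_ne_zero]
  exact (eulerMascheroniConstant_ne_harmonic n).symm

end LogGamma

section RealGaussian

open Module

variable {E : Type*} [NormedAddCommGroup E] [InnerProductSpace ℝ E] [FiniteDimensional ℝ E]
  [MeasurableSpace E] [BorelSpace E]

lemma integrable_exp_neg_mul_sq_norm {b : ℝ} (hb : 0 < b) :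
    Integrable fun x : E => Real.exp (-b * ‖x‖ ^ 2) := by
  refine Integrable.of_integral_ne_zero ?_
  rw [GaussianFourier.integral_rexp_neg_mul_sq_norm hb]
  positivity

lemma stdGaussian_eq_withDensity :
    stdGaussian E = volume.withDensity fun x => ENNReal.ofReal
      ((2 * Real.pi) ^ (-(finrank ℝ E / 2 : ℝ)) * Real.exp (-(1 / 2) * ‖x‖ ^ 2)) := by
  have hint := (integrable_exp_neg_mul_sq_norm (E := E) one_half_pos).const_mul
    ((2 * Real.pi) ^ (-(finrank ℝ E / 2 : ℝ)))
  have := isFiniteMeasure_withDensity_ofReal hint.hasFiniteIntegral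
  refine Measure.ext_of_charFun (funext fun t => ?_)
  rw [charFun_stdGaussian, charFun_apply, integral_withDensity_eq_integral_toReal_smul (by fun_prop)
    (.of_forall fun _ => ENNReal.ofReal_lt_top)]
  have hintegrand : ∀ x : E, (ENNReal.ofReal ((2 * Real.pi) ^ (-(finrank ℝ E / 2 : ℝ)) *
      Real.exp (-(1 / 2) * ‖x‖ ^ 2))).toReal • Complex.exp (inner ℝ x t * Complex.I) =
      ((2 * Real.pi : ℝ) : ℂ) ^ (-(finrank ℝ E / 2 : ℂ)) *
        Complex.exp (-(1 / 2) * ‖x‖ ^ 2 + Complex.I * inner ℝ t x) := fun x => by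
    rw [ENNReal.toReal_ofReal (by positivity), Complex.real_smul, Complex.exp_add,
      real_inner_comm, mul_comm Complex.I]
    push_cast [Complex.ofReal_cpow Real.two_pi_pos.le]
    ring
  simp_rw [hintegrand]
  rw [integral_const_mul, GaussianFourier.integral_cexp_neg_mul_sq_norm_add (by norm_num),
    Complex.I_sq, ← mul_assoc, div_div_eq_mul_div, div_one, mul_comm (Real.pi : ℂ),
    Complex.ofReal_mul, Complex.ofReal_ofNat, Complex.cpow_neg,
    inv_mul_cancel₀ (by simp [Complex.cpow_eq_zero_iff, Real.pi_ne_zero]), one_mul]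
  ring_nf

lemma integral_pow_mul_comp_half_sq {d : ℕ} (hd : 0 < d) (h : ℝ → ℝ) :
    ∫ y in Set.Ioi (0 : ℝ), y ^ (d - 1) * h (1 / 2 * y ^ 2) =
      2 ^ ((d : ℝ) / 2 - 1) * ∫ t in Set.Ioi (0 : ℝ), t ^ ((d : ℝ) / 2 - 1) * h t := by
  have hsquare : ∫ y in Set.Ioi (0 : ℝ), y ^ (d - 1) * h (1 / 2 * y ^ 2) =
      1 / 2 * ∫ u in Set.Ioi (0 : ℝ), u ^ ((d : ℝ) / 2 - 1) * h (1 / 2 * u) := by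
    rw [← integral_comp_rpow_Ioi_of_pos
      (g := fun u => u ^ ((d : ℝ) / 2 - 1) * h (1 / 2 * u)) two_pos, ← integral_const_mul]
    refine setIntegral_congr_fun measurableSet_Ioi fun y (hy : 0 < y) => ?_
    have hpow : y * (y ^ 2) ^ ((d : ℝ) / 2 - 1) = y ^ (d - 1) := by
      rw [← Real.rpow_natCast_mul hy.le, mul_comm y, ← Real.rpow_add_one hy.ne',
        ← Real.rpow_natCast, Nat.cast_pred hd]
      push_cast
      ring_nf
    simp only [smul_eq_mul, Real.rpow_two, ← hpow]
    norm_num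
    ring
  have hscale : ∫ u in Set.Ioi (0 : ℝ), u ^ ((d : ℝ) / 2 - 1) * h (1 / 2 * u) =
      2 * (2 ^ ((d : ℝ) / 2 - 1) * ∫ t in Set.Ioi (0 : ℝ), t ^ ((d : ℝ) / 2 - 1) * h t) := by
    have := integral_comp_mul_left_Ioi
      (fun t => 2 ^ ((d : ℝ) / 2 - 1) * (t ^ ((d : ℝ) / 2 - 1) * h t)) 0 one_half_pos
    rw [mul_zero, integral_const_mul _ fun t => t ^ ((d : ℝ) / 2 - 1) * h t, smul_eq_mul, one_div,
      inv_inv] at this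
    rw [← this]
    refine setIntegral_congr_fun measurableSet_Ioi fun u (hu : 0 < u) => ?_
    rw [← mul_assoc, ← Real.mul_rpow two_pos.le (by positivity), mul_inv_cancel_left₀ two_ne_zero,
      one_div]
  rw [hsquare, hscale]
  ring

variable [Nontrivial E]

lemma exists_integral_half_sq_norm_stdGaussian_eq_mul :
    ∃ c : ℝ, ∀ f : ℝ → ℝ, ∫ x, f (1 / 2 * ‖x‖ ^ 2) ∂stdGaussian E =
      c * ∫ t, f t ∂gammaMeasure (finrank ℝ E / 2) 1 := by
  have hd : 0 < finrank ℝ E := finrank_pos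
  have hd' : (0 : ℝ) < finrank ℝ E / 2 := by positivity
  rw [stdGaussian_eq_withDensity]
  set C := (2 * Real.pi) ^ (-(finrank ℝ E / 2 : ℝ))
  refine ⟨finrank ℝ E * (volume : Measure E).real (Metric.ball 0 1) * C *
    2 ^ ((finrank ℝ E : ℝ) / 2 - 1) * Real.Gamma (finrank ℝ E / 2), fun f => ?_⟩
  rw [integral_gammaMeasure hd' one_pos, Real.one_rpow,
    integral_withDensity_eq_integral_toReal_smul (by fun_prop)
      (.of_forall fun _ => ENNReal.ofReal_lt_top)]
  have hradial : ∀ x : E, (ENNReal.ofReal (C * Real.exp (-(1 / 2) * ‖x‖ ^ 2))).toReal •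
      f (1 / 2 * ‖x‖ ^ 2) = C * (Real.exp (-(1 / 2 * ‖x‖ ^ 2)) * f (1 / 2 * ‖x‖ ^ 2)) :=
    fun x => by rw [ENNReal.toReal_ofReal (by positivity), smul_eq_mul, mul_assoc, neg_mul]
  simp_rw [hradial]
  rw [integral_const_mul, integral_fun_norm_addHaar volume
    fun y => Real.exp (-(1 / 2 * y ^ 2)) * f (1 / 2 * y ^ 2)]
  simp only [smul_eq_mul, nsmul_eq_mul, one_mul]
  rw [integral_pow_mul_comp_half_sq hd fun t => Real.exp (-t) * f t]
  field_simp [(Real.Gamma_pos_of_pos hd').ne']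

-- The law is determined up to a constant factor by polar coordinates, and both sides have mass `1`.
lemma map_half_sq_norm_stdGaussian :
    (stdGaussian E).map (fun x => 1 / 2 * ‖x‖ ^ 2) = gammaMeasure (finrank ℝ E / 2) 1 := by
  have hd : (0 : ℝ) < finrank ℝ E / 2 := by have := finrank_pos (R := ℝ) (M := E); positivity
  have := isProbabilityMeasure_gammaMeasure hd one_pos
  have := isProbabilityMeasure_stdGaussian (E := E)
  have hmeas : Measurable fun x : E => 1 / 2 * ‖x‖ ^ 2 := by fun_prop
  have := Measure.isProbabilityMeasure_map (μ := stdGaussian E) hmeas.aemeasurable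
  obtain ⟨c, hc⟩ := exists_integral_half_sq_norm_stdGaussian_eq_mul (E := E)
  have hreal : ∀ s, MeasurableSet s → ((stdGaussian E).map fun x => 1 / 2 * ‖x‖ ^ 2).real s =
      c * (gammaMeasure (finrank ℝ E / 2) 1).real s := fun s hs => by
    rw [← integral_indicator_one hs, ← integral_indicator_one hs, ← hc, integral_map
      hmeas.aemeasurable (measurable_one.indicator hs).aestronglyMeasurable]
  have hc1 : c = 1 := by simpa only [probReal_univ, mul_one] using (hreal _ .univ).symm
  exact Measure.ext fun s hs => (measureReal_eq_measureReal_iff).1 <| by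
    rw [hreal s hs, hc1, one_mul]

end RealGaussian

section ComplexGaussian

open Module

attribute [local instance] InnerProductSpace.complexToReal

variable (E : Type*) [NormedAddCommGroup E] [InnerProductSpace ℂ E] [FiniteDimensional ℂ E]
  [MeasurableSpace E] [BorelSpace E]

/-- The standard Gaussian measure on a finite-dimensional complex inner product space, with
independent standard normal real and imaginary parts of the coordinates; hence `E ‖x‖² = 2 dim E`,
twice the usual normalization of a circularly symmetric complex Gaussian. -/
noncomputable def complexGaussian : Measure E :=
  stdGaussian E

instance : IsProbabilityMeasure (complexGaussian E) :=
  isProbabilityMeasure_stdGaussian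

lemma map_half_sq_norm_complexGaussian [Nontrivial E] :
    (complexGaussian E).map (fun x => 1 / 2 * ‖x‖ ^ 2) = gammaMeasure (finrank ℂ E) 1 := by
  rw [complexGaussian, map_half_sq_norm_stdGaussian, finrank_real_of_complex]
  push_cast
  rw [mul_div_cancel_left₀ _ two_ne_zero]

variable {E} {F : Type*} [NormedAddCommGroup F] [InnerProductSpace ℂ F] [FiniteDimensional ℂ F]
  [MeasurableSpace F] [BorelSpace F]

lemma measurePreserving_complexGaussian {L : E →ₗ[ℂ] F} (hL : L ∘ₗ L.adjoint = LinearMap.id) :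
    MeasurePreserving L (complexGaussian E) (complexGaussian F) := by
  have hcont : Continuous L := L.continuous_of_finiteDimensional
  have hinner : ∀ x t, inner ℝ (L x) t = inner ℝ x (L.adjoint t) := fun x t => by
    rw [real_inner_eq_re_inner ℂ, real_inner_eq_re_inner ℂ, LinearMap.adjoint_inner_right]
  have hnorm : ∀ t, ‖L.adjoint t‖ = ‖t‖ := fun t => by
    rw [← sq_eq_sq₀ (norm_nonneg _) (norm_nonneg _), ← inner_self_eq_norm_sq (𝕜 := ℂ),
      ← inner_self_eq_norm_sq (𝕜 := ℂ), LinearMap.adjoint_inner_left, ← LinearMap.comp_apply, hL,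
      LinearMap.id_apply]
  refine ⟨hcont.measurable, ?_⟩
  unfold complexGaussian
  have := Measure.isProbabilityMeasure_map (μ := stdGaussian E) hcont.aemeasurable
  refine Measure.ext_of_charFun (funext fun t => ?_)
  rw [charFun_stdGaussian, ← hnorm, ← charFun_stdGaussian, charFun_apply, charFun_apply,
    integral_map hcont.aemeasurable (by fun_prop)]
  simp_rw [hinner]

lemma map_half_sq_norm_projection_complexGaussian (K : Submodule ℂ E) [Nontrivial K] :
    (complexGaussian E).map (fun x => 1 / 2 * ‖K.orthogonalProjectionOnto x‖ ^ 2) =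
      gammaMeasure (finrank ℂ K) 1 := by
  have hproj : MeasurePreserving K.orthogonalProjectionOnto.toLinearMap (complexGaussian E)
      (complexGaussian K) := by
    refine measurePreserving_complexGaussian ?_
    rw [ContinuousLinearMap.adjoint_toLinearMap, Submodule.adjoint_orthogonalProjectionOnto]
    exact LinearMap.ext K.orthogonalProjectionOnto_mem_subspace_eq_self
  rw [← map_half_sq_norm_complexGaussian, ← hproj.map_eq, Measure.map_map (by fun_prop)
    hproj.measurable]
  rfl

end ComplexGaussian

section GramDeterminant

variable {E ι : Type*} [NormedAddCommGroup E] [InnerProductSpace ℂ E] [Fintype ι] [DecidableEq ι]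

/-- The Gram determinant of a finite family of vectors, i.e. the squared volume of the
parallelotope it spans. The determinant is a nonnegative real, so its norm is the same number. -/
noncomputable def gramDet (x : ι → E) : ℝ :=
  ‖(gram ℂ x).det‖

lemma gramDet_ne_zero {x : ι → E} : gramDet x ≠ 0 ↔ LinearIndependent ℂ x := by
  rw [gramDet, norm_ne_zero_iff, det_gram_ne_zero_iff_linearIndependent]

lemma continuous_gramDet : Continuous (gramDet : (ι → E) → ℝ) := by
  unfold gramDet gram
  fun_prop

lemma gramDet_sum_smul (R : Matrix ι ι ℂ) (x : ι → E) :
    gramDet (fun j => ∑ i, R i j • x i) = ‖R.det‖ ^ 2 * gramDet x := by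
  have hgram : gram ℂ (fun j => ∑ i, R i j • x i) = Rᴴ * gram ℂ x * R := by
    ext j k
    simp only [gram_apply, inner_sum, sum_inner, inner_smul_left, inner_smul_right, mul_apply,
      conjTranspose_apply, Finset.sum_mul, Finset.mul_sum, RCLike.star_def]
    refine Finset.sum_congr rfl fun i _ => Finset.sum_congr rfl fun l _ => ?_
    ring
  rw [gramDet, hgram, det_mul, det_mul, det_conjTranspose, norm_mul, norm_mul, norm_star, gramDet]
  ring

variable [FiniteDimensional ℂ E]

lemma gramDet_vecCons {n : ℕ} (y : E) (x : Fin n → E) :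
    gramDet (vecCons y x) =
      ‖(Submodule.span ℂ (Set.range x))ᗮ.orthogonalProjectionOnto y‖ ^ 2 * gramDet x := by
  set K := Submodule.span ℂ (Set.range x)
  set q := Kᗮ.orthogonalProjectionOnto y
  obtain ⟨c, hc⟩ : ∃ c : Fin n → ℂ, ∑ i, c i • x i = y - q := by
    rw [← Submodule.mem_span_range_iff_exists_fun]
    exact K.orthogonal_orthogonal.le (Submodule.sub_starProjection_mem_orthogonal y)
  have hcol : ∀ i, ∑ j, vecCons 1 (-c) j • gram ℂ (vecCons y x) i j =
      inner ℂ (vecCons y x i) (q : E) := fun i => by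
    simp only [gram_apply, Fin.sum_univ_succ, cons_val_zero, cons_val_succ, one_smul, Pi.neg_apply,
      neg_smul, Finset.sum_neg_distrib, smul_eq_mul, ← inner_smul_right, ← inner_sum, hc]
    abel_nf
  have hdet : (gram ℂ (vecCons y x)).det =
      ((gram ℂ (vecCons y x)).updateCol 0 fun i => inner ℂ (vecCons y x i) (q : E)).det := by
    rw [← one_smul ℂ (gram ℂ (vecCons y x)).det, ← cons_val_zero (1 : ℂ) (-c),
      ← det_updateCol_sum]
    simp_rw [hcol]
  have hx : ∀ i, inner ℂ (x i) (q : E) = 0 := fun i =>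
    Submodule.inner_right_of_mem_orthogonal (Submodule.subset_span (Set.mem_range_self i)) q.2
  have hy : inner ℂ y (q : E) = (‖q‖ : ℂ) ^ 2 := by
    rw [← Submodule.inner_orthogonalProjectionOnto_eq_of_mem_right, inner_self_eq_norm_sq_to_K]
    rfl
  have hminor : ((gram ℂ (vecCons y x)).updateCol 0
      fun i => inner ℂ (vecCons y x i) (q : E)).submatrix (Fin.succAbove 0) Fin.succ =
      gram ℂ x := by
    ext i j
    simp
  rw [gramDet, hdet, det_succ_column_zero, Fin.sum_univ_succ, Finset.sum_eq_zero, hminor]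
  · simp [hy, gramDet]
  · simp [hx]

end GramDeterminant

section GaussianGramDeterminant

open Module

lemma integral_comp_of_measurePreserving {α β : Type*} [MeasurableSpace α] [MeasurableSpace β]
    {G : Type*} [NormedAddCommGroup G] [NormedSpace ℝ G] {μ : Measure α} {ν : Measure β}
    {f : α → β} (hf : MeasurePreserving f μ ν) {g : β → G} (hg : AEStronglyMeasurable g ν) :
    ∫ x, g (f x) ∂μ = ∫ y, g y ∂ν := by
  rw [← hf.map_eq, integral_map hf.aemeasurable (hf.map_eq ▸ hg)]

lemma measurable_vecCons {α : Type*} [MeasurableSpace α] {n : ℕ} :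
    Measurable fun p : α × (Fin n → α) => vecCons p.1 p.2 :=
  measurable_pi_lambda _
    (Fin.cases measurable_fst fun i => (measurable_pi_apply i).comp measurable_snd)

lemma measurePreserving_vecTail {α : Type*} [MeasurableSpace α] (n : ℕ) (μ : Measure α)
    [IsProbabilityMeasure μ] :
    MeasurePreserving vecTail (.pi fun _ : Fin (n + 1) => μ) (.pi fun _ : Fin n => μ) :=
  measurePreserving_snd.comp (measurePreserving_piFinSuccAbove (fun _ => μ) 0)

lemma ae_gammaMeasure_ne_zero (a r : ℝ) : ∀ᵐ t ∂gammaMeasure a r, t ≠ 0 :=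
  (withDensity_absolutelyContinuous _ _).ae_le (Measure.ae_ne volume 0)

variable {E : Type*} [NormedAddCommGroup E] [InnerProductSpace ℂ E] [FiniteDimensional ℂ E]
  [MeasurableSpace E] [BorelSpace E]

lemma measurable_gramDet {n : ℕ} : Measurable (gramDet : (Fin n → E) → ℝ) :=
  have := FiniteDimensional.proper ℂ E
  continuous_gramDet.measurable

lemma map_gramDet_vecCons_div_gramDet {n k : ℕ} (hE : finrank ℂ E = n + (k + 1)) {x : Fin n → E}
    (hx : LinearIndependent ℂ x) :
    (complexGaussian E).map (fun y => 1 / 2 * (gramDet (vecCons y x) / gramDet x)) =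
      gammaMeasure (k + 1) 1 := by
  have hfinrank : finrank ℂ (Submodule.span ℂ (Set.range x))ᗮ = k + 1 := by
    have := (Submodule.span ℂ (Set.range x)).finrank_add_finrank_orthogonal
    rw [finrank_span_eq_card hx, Fintype.card_fin] at this
    omega
  have : Nontrivial (Submodule.span ℂ (Set.range x))ᗮ :=
    nontrivial_of_finrank_pos (R := ℂ) (by omega)
  simp_rw [gramDet_vecCons, mul_div_cancel_right₀ _ (gramDet_ne_zero.2 hx)]
  rw [map_half_sq_norm_projection_complexGaussian, hfinrank, Nat.cast_succ]

lemma measurePreserving_gramDet_div_gramDet_vecTail {n k : ℕ} (hE : finrank ℂ E = n + (k + 1))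
    (hn : ∀ᵐ x ∂Measure.pi fun _ : Fin n => complexGaussian E, LinearIndependent ℂ x) :
    MeasurePreserving (fun x => 1 / 2 * (gramDet x / gramDet (vecTail x)))
      (.pi fun _ : Fin (n + 1) => complexGaussian E) (gammaMeasure (k + 1) 1) := by
  have hmeas : Measurable fun p : (Fin n → E) × E =>
      1 / 2 * (gramDet (vecCons p.2 p.1) / gramDet p.1) :=
    ((measurable_gramDet.comp (measurable_vecCons.comp measurable_swap)).div
      (measurable_gramDet.comp measurable_fst)).const_mul _
  have hratio := (MeasurePreserving.id (.pi fun _ : Fin n => complexGaussian E)).skew_product hmeas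
    (hn.mono fun x hx => map_gramDet_vecCons_div_gramDet hE hx)
  have hsplit := Measure.measurePreserving_swap.comp
    (measurePreserving_piFinSuccAbove (fun _ => complexGaussian E) (0 : Fin (n + 1)))
  have := isProbabilityMeasure_gammaMeasure (a := k + 1) (by positivity) one_pos
  convert measurePreserving_snd.comp (hratio.comp hsplit) using 1
  ext x
  exact congrArg (fun v => 1 / 2 * (gramDet v / gramDet (vecTail x))) (cons_head_tail x).symm

lemma ae_linearIndependent_complexGaussian {n : ℕ} (hn : n ≤ finrank ℂ E) :
    ∀ᵐ x ∂Measure.pi fun _ : Fin n => complexGaussian E, LinearIndependent ℂ x := by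
  induction n with
  | zero => exact .of_forall fun x => linearIndependent_empty_type
  | succ n ih =>
    obtain ⟨k, hk⟩ := Nat.exists_eq_add_of_le hn
    have hlaw := measurePreserving_gramDet_div_gramDet_vecTail (k := k) (hk.trans (by omega))
      (ih (by omega))
    filter_upwards [hlaw.quasiMeasurePreserving.ae (ae_gammaMeasure_ne_zero _ _)] with x hx
    rw [← gramDet_ne_zero]
    intro h
    simp [h] at hx

lemma integrable_and_integral_log_gramDet_div_gramDet_vecTail {n k : ℕ}
    (hE : finrank ℂ E = n + (k + 1)) :
    Integrable (fun x => Real.log (gramDet x / gramDet (vecTail x)))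
        (.pi fun _ : Fin (n + 1) => complexGaussian E) ∧
      ∫ x, Real.log (gramDet x / gramDet (vecTail x))
          ∂Measure.pi (fun _ : Fin (n + 1) => complexGaussian E) =
        Real.log 2 - Real.eulerMascheroniConstant + harmonic k := by
  have hlaw := measurePreserving_gramDet_div_gramDet_vecTail hE
    (ae_linearIndependent_complexGaussian (by omega))
  have hint : Integrable (fun x => Real.log (1 / 2 * (gramDet x / gramDet (vecTail x))))
      (.pi fun _ : Fin (n + 1) => complexGaussian E) :=
    hlaw.integrable_comp_of_integrable (integrable_log_gammaMeasure k)
  have hlog : (fun x => Real.log 2 + Real.log (1 / 2 * (gramDet x / gramDet (vecTail x))))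
      =ᵐ[Measure.pi fun _ : Fin (n + 1) => complexGaussian E]
        fun x => Real.log (gramDet x / gramDet (vecTail x)) := by
    filter_upwards [hlaw.quasiMeasurePreserving.ae (ae_gammaMeasure_ne_zero _ _)] with x hx
    rw [← Real.log_mul two_ne_zero hx, ← mul_assoc, mul_one_div_cancel two_ne_zero, one_mul]
  refine ⟨((integrable_const _).add hint).congr hlog, ?_⟩
  rw [← integral_congr_ae hlog, integral_add (integrable_const _) hint,
    integral_comp_of_measurePreserving hlaw Real.measurable_log.aestronglyMeasurable,
    integral_log_gammaMeasure, integral_const, probReal_univ, one_smul]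
  ring

lemma integrable_and_integral_log_gramDet_complexGaussian {n : ℕ} (hn : n ≤ finrank ℂ E) :
    Integrable (fun x => Real.log (gramDet x)) (.pi fun _ : Fin n => complexGaussian E) ∧
      ∫ x, Real.log (gramDet x) ∂Measure.pi (fun _ : Fin n => complexGaussian E) =
        ∑ j ∈ Finset.range n,
          (Real.log 2 - Real.eulerMascheroniConstant + harmonic (finrank ℂ E - 1 - j)) := by
  induction n with
  | zero => simp [gramDet]
  | succ n ih =>
    obtain ⟨k, hk⟩ := Nat.exists_eq_add_of_le hn
    obtain ⟨hint, hval⟩ := ih (by omega)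
    obtain ⟨hintRatio, hvalRatio⟩ :=
      integrable_and_integral_log_gramDet_div_gramDet_vecTail (n := n) (k := k) (E := E)
        (hk.trans (by omega))
    have htail := measurePreserving_vecTail n (complexGaussian E)
    have hintTail : Integrable (fun x => Real.log (gramDet (vecTail x)))
        (.pi fun _ : Fin (n + 1) => complexGaussian E) :=
      htail.integrable_comp_of_integrable hint
    have hlog : (fun x => Real.log (gramDet (vecTail x)) +
        Real.log (gramDet x / gramDet (vecTail x)))
        =ᵐ[Measure.pi fun _ : Fin (n + 1) => complexGaussian E] fun x => Real.log (gramDet x) := by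
      filter_upwards [ae_linearIndependent_complexGaussian hn,
        htail.quasiMeasurePreserving.ae (ae_linearIndependent_complexGaussian (by omega))]
        with x hx hxTail
      rw [Real.log_div (gramDet_ne_zero.2 hx) (gramDet_ne_zero.2 hxTail), add_sub_cancel]
    refine ⟨(hintTail.add hintRatio).congr hlog, ?_⟩
    rw [← integral_congr_ae hlog, integral_add hintTail hintRatio, hvalRatio,
      integral_comp_of_measurePreserving htail hint.aestronglyMeasurable, hval,
      Finset.sum_range_succ, show finrank ℂ E - 1 - n = k by omega]

end GaussianGramDeterminant

section HaarUnitary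

open Module

lemma gramDet_of_orthonormal {E ι : Type*} [NormedAddCommGroup E] [InnerProductSpace ℂ E]
    [Fintype ι] [DecidableEq ι] {x : ι → E} (hx : Orthonormal ℂ x) : gramDet x = 1 := by
  rw [gramDet, gram_eq_one_iff_orthonormal.2 hx, det_one, norm_one]

lemma exists_orthonormalBasis_gramDet_comp {E F ι : Type*} [NormedAddCommGroup E]
    [InnerProductSpace ℂ E] [FiniteDimensional ℂ E] [NormedAddCommGroup F] [InnerProductSpace ℂ F]
    [Fintype ι] {n : ℕ} (hι : finrank ℂ E = Fintype.card ι) (e : Fin n ↪ ι) {x : Fin n → E}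
    (hx : LinearIndependent ℂ x) :
    ∃ b : OrthonormalBasis ι ℂ E, ∀ L : E →ₗ[ℂ] F,
      gramDet (L ∘ x) = gramDet (L ∘ b ∘ e) * gramDet x := by
  have hw := InnerProductSpace.gramSchmidtNormed_orthonormal hx
  set w := InnerProductSpace.gramSchmidtNormed ℂ x
  have hext : Orthonormal ℂ ((Set.range e).domRestrict (Function.extend e w 0)) := by
    convert hw.comp _ (Equiv.ofInjective e e.injective).symm.injective using 1
    ext1 ⟨_, i, rfl⟩
    rw [Set.domRestrict_apply, e.injective.extend_apply, Function.comp_apply,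
      Equiv.ofInjective_symm_apply]
  obtain ⟨b, hb⟩ := hext.exists_orthonormalBasis_extension_of_card_eq hι
  have hbe : b ∘ e = w := funext fun j => by
    rw [Function.comp_apply, hb _ ⟨j, rfl⟩, e.injective.extend_apply]
  have hspan : ∀ j, ∃ c : Fin n → ℂ, ∑ i, c i • w i = x j := fun j => by
    rw [← Submodule.mem_span_range_iff_exists_fun, InnerProductSpace.span_gramSchmidtNormed_range,
      InnerProductSpace.span_gramSchmidt]
    exact Submodule.subset_span ⟨j, rfl⟩
  choose R hR using hspan
  have hgramDet : gramDet x = ‖(of R)ᵀ.det‖ ^ 2 := by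
    rw [← mul_one (_ ^ 2), ← gramDet_of_orthonormal hw, ← gramDet_sum_smul]
    simp_rw [transpose_apply, of_apply, hR]
  refine ⟨b, fun L => ?_⟩
  rw [hgramDet, hbe, mul_comm, ← gramDet_sum_smul]
  simp_rw [transpose_apply, of_apply, Function.comp_apply, ← map_smul, ← map_sum, hR]
  rfl

instance compactSpace_unitaryGroup {n : Type*} [Fintype n] [DecidableEq n] :
    CompactSpace (unitaryGroup n ℂ) := by
  have hbox : IsCompact (Set.univ.pi fun _ => Set.univ.pi fun _ => Metric.closedBall 0 1 :
      Set (Matrix n n ℂ)) :=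
    isCompact_univ_pi fun _ => isCompact_univ_pi fun _ => isCompact_closedBall 0 1
  have hclosed : IsClosed (unitaryGroup n ℂ : Set (Matrix n n ℂ)) := isClosed_unitary
  refine isCompact_iff_compactSpace.1 (hbox.of_isClosed_subset hclosed ?_)
  exact fun U hU i _ j _ => mem_closedBall_zero_iff.2 (entry_norm_bound_of_unitary hU i j)

lemma measurePreserving_mul_right_of_isProbabilityMeasure {G : Type*} [Group G] [TopologicalSpace G]
    [IsTopologicalGroup G] [LocallyCompactSpace G] [MeasurableSpace G] [BorelSpace G]
    (μ : Measure G) [μ.IsHaarMeasure] [IsProbabilityMeasure μ] (g : G) :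
    MeasurePreserving (· * g) μ μ := by
  have := μ.isHaarMeasure_map_mul_right g
  have := Measure.isProbabilityMeasure_map (μ := μ) (continuous_mul_const g).aemeasurable
  exact ⟨(continuous_mul_const g).measurable,
    Measure.isHaarMeasure_eq_of_isProbabilityMeasure _ _⟩

variable {m mt mr : ℕ}

/-- The first `mr` rows of a unitary matrix, as a linear map `ℂᵐ → ℂ^mr`; the columns of the
Jacobi channel matrix are the images of the first `mt` standard basis vectors. -/
noncomputable def topRows (hr : mr ≤ m) (U : unitaryGroup (Fin m) ℂ) :
    EuclideanSpace ℂ (Fin m) →ₗ[ℂ] EuclideanSpace ℂ (Fin mr) :=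
  toEuclideanLin ((U : Matrix (Fin m) (Fin m) ℂ).submatrix (Fin.castLE hr) id)

lemma topRows_comp_adjoint (hr : mr ≤ m) (U : unitaryGroup (Fin m) ℂ) :
    topRows hr U ∘ₗ (topRows hr U).adjoint = LinearMap.id := by
  have hU : (U : Matrix (Fin m) (Fin m) ℂ).submatrix (Fin.castLE hr) id *
      ((U : Matrix (Fin m) (Fin m) ℂ).submatrix (Fin.castLE hr) id)ᴴ = 1 := by
    rw [conjTranspose_submatrix, ← submatrix_mul _ _ _ _ _ Function.bijective_id,
      ← star_eq_conjTranspose, mem_unitaryGroup_iff.1 U.2,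
      submatrix_one _ (Fin.castLE_injective hr)]
  rw [topRows, ← toEuclideanLin_conjTranspose_eq_adjoint, ← toLpLin_mul_same, hU, toLpLin_one]

lemma continuous_topRows_comp (hr : mr ≤ m) (n : ℕ) :
    Continuous fun p : unitaryGroup (Fin m) ℂ × (Fin n → EuclideanSpace ℂ (Fin m)) =>
      topRows hr p.1 ∘ p.2 := by
  refine continuous_pi fun j => ?_
  simp only [topRows, Function.comp_apply, toLpLin_apply]
  fun_prop

lemma measurePreserving_topRows (hr : mr ≤ m) (U : unitaryGroup (Fin m) ℂ) (n : ℕ) :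
    MeasurePreserving (topRows hr U ∘ ·)
      (.pi fun _ : Fin n => complexGaussian (EuclideanSpace ℂ (Fin m)))
      (.pi fun _ : Fin n => complexGaussian (EuclideanSpace ℂ (Fin mr))) :=
  measurePreserving_pi _ _ fun _ =>
    measurePreserving_complexGaussian (topRows_comp_adjoint hr U)

lemma continuous_jacobiH (hr : mr ≤ m) (ht : mt ≤ m) : Continuous (jacobiH m mt mr hr ht) :=
  continuous_subtype_val.matrix_submatrix _ _

/-- The Gram determinant `det (Hᴴ H)` of the Jacobi channel matrix, a nonnegative real and therefore
equal to its norm. -/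
noncomputable def jacobiGramDet (hr : mr ≤ m) (ht : mt ≤ m) (U : unitaryGroup (Fin m) ℂ) : ℝ :=
  ‖((jacobiH m mt mr hr ht U)ᴴ * jacobiH m mt mr hr ht U).det‖

lemma continuous_jacobiGramDet (hr : mr ≤ m) (ht : mt ≤ m) :
    Continuous (jacobiGramDet hr ht) := by
  have := continuous_jacobiH hr ht
  unfold jacobiGramDet
  fun_prop

lemma exists_gramDet_topRows_comp (hr : mr ≤ m) (ht : mt ≤ m)
    {x : Fin mt → EuclideanSpace ℂ (Fin m)} (hx : LinearIndependent ℂ x) :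
    ∃ Q : unitaryGroup (Fin m) ℂ, ∀ U, gramDet (topRows hr U ∘ x) =
      jacobiGramDet hr ht (U * Q) * gramDet x := by
  obtain ⟨b, hb⟩ := exists_orthonormalBasis_gramDet_comp (F := EuclideanSpace ℂ (Fin mr))
    (by simp) (Fin.castLEEmb ht) hx
  let Q : unitaryGroup (Fin m) ℂ :=
    ⟨_, (EuclideanSpace.basisFun (Fin m) ℂ).toMatrix_orthonormalBasis_mem_unitary b⟩
  refine ⟨Q, fun U => ?_⟩
  have hcol : of (fun i j => (EuclideanSpace.basisFun (Fin mr) ℂ).repr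
      ((topRows hr U ∘ b ∘ Fin.castLEEmb ht) j) i) = jacobiH m mt mr hr ht (U * Q) := rfl
  rw [hb, gramDet, gram_eq_conjTranspose_mul (EuclideanSpace.basisFun (Fin mr) ℂ), hcol,
    jacobiGramDet]

variable (μ : Measure (unitaryGroup (Fin m) ℂ)) [IsProbabilityMeasure μ]

lemma measurePreserving_topRows_prod (hr : mr ≤ m) (n : ℕ) :
    MeasurePreserving (fun p => topRows hr p.1 ∘ p.2)
      (μ.prod (.pi fun _ : Fin n => complexGaussian (EuclideanSpace ℂ (Fin m))))
      (.pi fun _ : Fin n => complexGaussian (EuclideanSpace ℂ (Fin mr))) :=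
  measurePreserving_snd.comp ((MeasurePreserving.id μ).skew_product
    (continuous_topRows_comp hr n).measurable
    (.of_forall fun U => (measurePreserving_topRows hr U n).map_eq))

lemma ae_linearIndependent_topRows_comp (hr : mr ≤ m) {n : ℕ} (hn : n ≤ mr) :
    ∀ᵐ p ∂μ.prod (.pi fun _ : Fin n => complexGaussian (EuclideanSpace ℂ (Fin m))),
      LinearIndependent ℂ (topRows hr p.1 ∘ p.2) :=
  (measurePreserving_topRows_prod μ hr n).quasiMeasurePreserving.ae
    (ae_linearIndependent_complexGaussian (by simpa using hn))

variable [μ.IsHaarMeasure]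

lemma measurePreserving_gramDet_topRows_div_gramDet (hr : mr ≤ m) (ht : mt ≤ m) :
    MeasurePreserving (fun p => gramDet (topRows hr p.1 ∘ p.2) / gramDet p.2)
      (μ.prod (.pi fun _ : Fin mt => complexGaussian (EuclideanSpace ℂ (Fin m))))
      (μ.map (jacobiGramDet hr ht)) := by
  have hjacobi := (continuous_jacobiGramDet hr ht).measurable
  have := Measure.isProbabilityMeasure_map (μ := μ) hjacobi.aemeasurable
  have hmeas : Measurable fun p : (Fin mt → EuclideanSpace ℂ (Fin m)) × unitaryGroup (Fin m) ℂ =>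
      gramDet (topRows hr p.2 ∘ p.1) / gramDet p.1 :=
    (measurable_gramDet.comp ((continuous_topRows_comp hr mt).measurable.comp measurable_swap)).div
      (measurable_gramDet.comp measurable_fst)
  have hlaw : ∀ᵐ x ∂Measure.pi fun _ : Fin mt => complexGaussian (EuclideanSpace ℂ (Fin m)),
      μ.map (fun U => gramDet (topRows hr U ∘ x) / gramDet x) = μ.map (jacobiGramDet hr ht) := by
    filter_upwards [ae_linearIndependent_complexGaussian (by simpa using ht)] with x hx
    obtain ⟨Q, hQ⟩ := exists_gramDet_topRows_comp hr ht hx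
    have hright := measurePreserving_mul_right_of_isProbabilityMeasure μ Q
    simp_rw [hQ, mul_div_cancel_right₀ _ (gramDet_ne_zero.2 hx)]
    conv_rhs => rw [← hright.map_eq, Measure.map_map hjacobi hright.measurable]
    rfl
  exact measurePreserving_snd.comp
    (((MeasurePreserving.id _).skew_product hmeas hlaw).comp Measure.measurePreserving_swap)

lemma ae_jacobiGramDet_ne_zero (hr : mr ≤ m) (h : mt ≤ mr) :
    ∀ᵐ U ∂μ, jacobiGramDet hr (h.trans hr) U ≠ 0 := by
  have hratio := measurePreserving_gramDet_topRows_div_gramDet μ hr (h.trans hr)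
  refine ae_of_ae_map (continuous_jacobiGramDet hr _).aemeasurable (p := (· ≠ 0)) ?_
  rw [← hratio.map_eq]
  refine (ae_map_iff hratio.aemeasurable (measurableSet_singleton 0).compl).2 ?_
  filter_upwards [ae_linearIndependent_topRows_comp μ hr h] with p hrow
  exact div_ne_zero (gramDet_ne_zero.2 hrow)
    (gramDet_ne_zero.2 (LinearIndependent.of_comp (topRows hr p.1) hrow))

lemma integrable_and_integral_log_jacobiGramDet (hr : mr ≤ m) (h : mt ≤ mr) :
    Integrable (fun U => Real.log (jacobiGramDet hr (h.trans hr) U)) μ ∧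
      ∫ U, Real.log (jacobiGramDet hr (h.trans hr) U) ∂μ =
        ∑ j ∈ Finset.range mt, ((harmonic (mr - 1 - j) : ℝ) - harmonic (m - 1 - j)) := by
  let γ := Measure.pi fun _ : Fin mt => complexGaussian (EuclideanSpace ℂ (Fin m))
  obtain ⟨hint, hval⟩ := integrable_and_integral_log_gramDet_complexGaussian
    (E := EuclideanSpace ℂ (Fin m)) (n := mt) (by simpa using h.trans hr)
  obtain ⟨hintRows, hvalRows⟩ := integrable_and_integral_log_gramDet_complexGaussian
    (E := EuclideanSpace ℂ (Fin mr)) (n := mt) (by simpa using h)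
  have hratio := measurePreserving_gramDet_topRows_div_gramDet μ hr (h.trans hr)
  have hrows := measurePreserving_topRows_prod μ hr mt
  have hsnd : MeasurePreserving Prod.snd (μ.prod γ) γ := measurePreserving_snd
  have hjacobi := (continuous_jacobiGramDet hr (h.trans hr)).measurable
  have hintSnd : Integrable (fun p => Real.log (gramDet p.2)) (μ.prod γ) :=
    hsnd.integrable_comp_of_integrable hint
  have hintTopRows : Integrable (fun p => Real.log (gramDet (topRows hr p.1 ∘ p.2))) (μ.prod γ) :=
    hrows.integrable_comp_of_integrable hintRows
  have hlog : (fun p => Real.log (gramDet (topRows hr p.1 ∘ p.2)) - Real.log (gramDet p.2))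
      =ᵐ[μ.prod γ] fun p => Real.log (gramDet (topRows hr p.1 ∘ p.2) / gramDet p.2) := by
    filter_upwards [ae_linearIndependent_topRows_comp μ hr h] with p hrow
    rw [Real.log_div (gramDet_ne_zero.2 hrow)
      (gramDet_ne_zero.2 (LinearIndependent.of_comp (topRows hr p.1) hrow))]
  constructor
  · refine Integrable.comp_measurable (g := Real.log) ?_ hjacobi
    rw [← hratio.integrable_comp Real.measurable_log.aestronglyMeasurable]
    exact (hintTopRows.sub hintSnd).congr hlog
  · rw [← integral_map hjacobi.aemeasurable Real.measurable_log.aestronglyMeasurable,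
      ← integral_comp_of_measurePreserving hratio Real.measurable_log.aestronglyMeasurable,
      ← integral_congr_ae hlog, integral_sub hintTopRows hintSnd,
      integral_comp_of_measurePreserving hrows hintRows.aestronglyMeasurable,
      integral_comp_of_measurePreserving hsnd hint.aestronglyMeasurable, hval, hvalRows,
      ← Finset.sum_sub_distrib]
    simp only [finrank_euclideanSpace_fin, add_sub_add_left_eq_sub]

end HaarUnitary

section LogDetOffset

open scoped ComplexOrder
open Filter Topology

variable {n : Type*} [Fintype n] [DecidableEq n]

/-- The gap between `log det (1 + s A)` and its growth rate `n log s`, for an `n × n` positive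
semidefinite matrix `A`. The determinant is then real, so taking real parts loses nothing. -/
noncomputable def logDetOffset (A : Matrix n n ℂ) (s : ℝ) : ℝ :=
  Real.log ((1 : Matrix n n ℂ) + (s : ℂ) • A).det.re - Fintype.card n * Real.log s

lemma re_det_one_add_smul {A : Matrix n n ℂ} (hA : A.IsHermitian) {s : ℝ} (hs : s ≠ 0) :
    ((1 : Matrix n n ℂ) + (s : ℂ) • A).det.re =
      s ^ Fintype.card n * ∏ i, (s⁻¹ + hA.eigenvalues i) := by
  have hscalar : (1 : Matrix n n ℂ) + (s : ℂ) • A = (-s : ℂ) • (scalar n (-s⁻¹ : ℂ) - A) := by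
    have hinv : (-s : ℂ) * -s⁻¹ = 1 := by
      rw [neg_mul_neg, ← Complex.ofReal_mul, mul_inv_cancel₀ hs, Complex.ofReal_one]
    rw [scalar_apply, ← smul_one_eq_diagonal, smul_sub, smul_smul, hinv, one_smul, neg_smul,
      sub_neg_eq_add]
  rw [hscalar, det_smul, ← eval_charpoly, hA.charpoly_eq, Polynomial.eval_prod,
    ← Finset.card_univ, ← Finset.prod_const, ← Finset.prod_mul_distrib, ← Finset.prod_const,
    ← Finset.prod_mul_distrib, ← Complex.ofReal_re (∏ i, s * (s⁻¹ + hA.eigenvalues i)),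
    Complex.ofReal_prod]
  congr 2 with i
  simp only [Complex.ofReal_inv, Complex.coe_algebraMap, Polynomial.eval_sub, Polynomial.eval_X,
    Polynomial.eval_C, neg_mul, Complex.ofReal_mul, Complex.ofReal_add]
  ring

variable {A : Matrix n n ℂ}

lemma inv_add_eigenvalues_pos (hA : A.PosSemidef) {s : ℝ} (hs : 0 < s) (i : n) :
    0 < s⁻¹ + hA.isHermitian.eigenvalues i :=
  add_pos_of_pos_of_nonneg (inv_pos.2 hs) (hA.eigenvalues_nonneg i)

lemma re_det_one_add_smul_pos (hA : A.PosSemidef) {s : ℝ} (hs : 0 < s) :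
    0 < ((1 : Matrix n n ℂ) + (s : ℂ) • A).det.re := by
  rw [re_det_one_add_smul hA.isHermitian hs.ne']
  exact mul_pos (pow_pos hs _) (Finset.prod_pos fun i _ => inv_add_eigenvalues_pos hA hs i)

lemma logDetOffset_eq_log_prod (hA : A.PosSemidef) {s : ℝ} (hs : 0 < s) :
    logDetOffset A s = Real.log (∏ i, (s⁻¹ + hA.isHermitian.eigenvalues i)) := by
  rw [logDetOffset, re_det_one_add_smul hA.isHermitian hs.ne', Real.log_mul (pow_pos hs _).ne'
    (Finset.prod_pos fun i _ => inv_add_eigenvalues_pos hA hs i).ne', Real.log_pow,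
    add_sub_cancel_left]

lemma antitoneOn_logDetOffset (hA : A.PosSemidef) :
    AntitoneOn (logDetOffset A) (Set.Ioi 0) := by
  intro s hs t ht hst
  rw [logDetOffset_eq_log_prod hA hs, logDetOffset_eq_log_prod hA ht]
  refine Real.log_le_log (Finset.prod_pos fun i _ => inv_add_eigenvalues_pos hA ht i)
    (Finset.prod_le_prod (fun i _ => (inv_add_eigenvalues_pos hA ht i).le) fun i _ => ?_)
  gcongr

lemma tendsto_logDetOffset (hA : A.PosSemidef) (hdet : A.det ≠ 0) :
    Tendsto (logDetOffset A) atTop (𝓝 (Real.log ‖A.det‖)) := by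
  have hprod : A.det = ((∏ i, hA.isHermitian.eigenvalues i : ℝ) : ℂ) := by
    rw [hA.isHermitian.det_eq_prod_eigenvalues, Complex.ofReal_prod]
    rfl
  have hlim : Tendsto (fun s : ℝ => ∏ i, (s⁻¹ + hA.isHermitian.eigenvalues i)) atTop
      (𝓝 (∏ i, hA.isHermitian.eigenvalues i)) :=
    tendsto_finsetProd _ fun i _ => by
      simpa using tendsto_inv_atTop_zero.add_const (hA.isHermitian.eigenvalues i)
  rw [hprod, Complex.norm_real, Real.norm_eq_abs, Real.log_abs]
  rw [hprod, Complex.ofReal_ne_zero] at hdet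
  refine (hlim.log hdet).congr' ?_
  filter_upwards [eventually_gt_atTop 0] with s hs
  rw [logDetOffset_eq_log_prod hA hs]

lemma log_norm_det_le_logDetOffset (hA : A.PosSemidef) (hdet : A.det ≠ 0) {s : ℝ} (hs : 0 < s) :
    Real.log ‖A.det‖ ≤ logDetOffset A s :=
  le_of_tendsto (tendsto_logDetOffset hA hdet) <| (eventually_ge_atTop s).mono fun _ ht =>
    antitoneOn_logDetOffset hA hs (hs.trans_le ht) ht

variable {Ω : Type*} [TopologicalSpace Ω] [CompactSpace Ω] [MeasurableSpace Ω]
  [OpensMeasurableSpace Ω] {A : Ω → Matrix n n ℂ}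

lemma integrable_log_re_det_one_add_smul (μ : Measure Ω) [IsFiniteMeasure μ] (hA : Continuous A)
    (hpos : ∀ ω, (A ω).PosSemidef) {s : ℝ} (hs : 0 < s) :
    Integrable (fun ω => Real.log ((1 : Matrix n n ℂ) + (s : ℂ) • A ω).det.re) μ :=
  have hcont : Continuous fun ω => Real.log ((1 : Matrix n n ℂ) + (s : ℂ) • A ω).det.re :=
    Continuous.log (by fun_prop) fun ω => (re_det_one_add_smul_pos (hpos ω) hs).ne'
  hcont.integrable_of_hasCompactSupport (.of_compactSpace _)

variable {μ : Measure Ω} [IsProbabilityMeasure μ]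

lemma tendsto_integral_logDetOffset (hA : Continuous A) (hpos : ∀ ω, (A ω).PosSemidef)
    (hdet : ∀ᵐ ω ∂μ, (A ω).det ≠ 0) (hint : Integrable (fun ω => Real.log ‖(A ω).det‖) μ) :
    Tendsto (fun s => ∫ ω, logDetOffset (A ω) s ∂μ) atTop (𝓝 (∫ ω, Real.log ‖(A ω).det‖ ∂μ)) := by
  have hoffset : ∀ {s : ℝ}, 0 < s → Integrable (fun ω => logDetOffset (A ω) s) μ := fun hs =>
    (integrable_log_re_det_one_add_smul μ hA hpos hs).sub (integrable_const _)
  refine tendsto_integral_filter_of_dominated_convergence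
    (fun ω => max |Real.log ‖(A ω).det‖| |logDetOffset (A ω) 1|) ?_ ?_
    (hint.abs.sup (hoffset one_pos).abs) (hdet.mono fun ω => tendsto_logDetOffset (hpos ω))
  · filter_upwards [eventually_gt_atTop 0] with s hs using (hoffset hs).aestronglyMeasurable
  · filter_upwards [eventually_ge_atTop 1] with s hs
    filter_upwards [hdet] with ω hω
    have hs0 := one_pos.trans_le hs
    exact abs_le_max_abs_abs (log_norm_det_le_logDetOffset (hpos ω) hω hs0)
      (antitoneOn_logDetOffset (hpos ω) (Set.mem_Ioi.2 one_pos) hs0 hs)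

end LogDetOffset

section HighSNR

open scoped ComplexOrder

lemma integral_logDetOffset_jacobiH {m mt mr : ℕ} (hr : mr ≤ m) (ht : mt ≤ m)
    (μ : Measure (unitaryGroup (Fin m) ℂ)) [IsProbabilityMeasure μ] {s : ℝ} (hs : 0 < s) :
    ∫ U, logDetOffset ((jacobiH m mt mr hr ht U)ᴴ * jacobiH m mt mr hr ht U) s ∂μ =
      ergodicCapacity m mt mr hr ht s μ - mt * Real.log s := by
  have := continuous_jacobiH hr ht
  simp_rw [logDetOffset]
  rw [integral_sub (integrable_log_re_det_one_add_smul μ (by fun_prop)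
    (fun U => posSemidef_conjTranspose_mul_self _) hs) (integrable_const _), integral_const,
    probReal_univ, one_smul, Fintype.card_fin, ergodicCapacity]

lemma harmonic_sub_harmonic_add (n K : ℕ) :
    (harmonic n : ℝ) - harmonic (n + K) = -∑ k ∈ Finset.range K, 1 / ((n : ℝ) + 1 + k) := by
  induction K with
  | zero => simp
  | succ K ih =>
    rw [Finset.sum_range_succ, neg_add, ← ih, ← add_assoc, harmonic_succ]
    push_cast
    ring

lemma sum_harmonic_sub_harmonic {m mt mr : ℕ} (h : mt ≤ mr) (hr : mr ≤ m) :
    ∑ j ∈ Finset.range mt, ((harmonic (mr - 1 - j) : ℝ) - harmonic (m - 1 - j)) =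
      -∑ j ∈ Finset.range mt, ∑ k ∈ Finset.range (m - mr), 1 / ((mr : ℝ) + k - j) := by
  rw [← Finset.sum_neg_distrib]
  refine Finset.sum_congr rfl fun j hj => ?_
  obtain ⟨n, rfl⟩ := Nat.exists_eq_add_of_lt ((Finset.mem_range.1 hj).trans_le h)
  rw [show j + n + 1 - 1 - j = n by omega, show m - 1 - j = n + (m - (j + n + 1)) by omega,
    harmonic_sub_harmonic_add]
  congr! 3
  push_cast
  ring

theorem jacobi_ergodic_capacity_high_snr_general {m mt mr : ℕ} (h : mt ≤ mr) (hr : mr ≤ m)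
    (μ : Measure (unitaryGroup (Fin m) ℂ)) [μ.IsHaarMeasure] [IsProbabilityMeasure μ] :
    Filter.Tendsto
      (fun s : ℝ => ergodicCapacity m mt mr hr (h.trans hr) s μ - (mt : ℝ) * Real.log s)
      Filter.atTop
      (nhds (-(∑ j ∈ Finset.range mt, ∑ k ∈ Finset.range (m - mr),
          1 / ((mr : ℝ) + k - j)))) := by
  have hcont := continuous_jacobiH hr (h.trans hr)
  obtain ⟨hint, hval⟩ := integrable_and_integral_log_jacobiGramDet μ hr h
  have hne : ∀ᵐ U ∂μ, ((jacobiH m mt mr hr (h.trans hr) U)ᴴ *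
      jacobiH m mt mr hr (h.trans hr) U).det ≠ 0 :=
    (ae_jacobiGramDet_ne_zero μ hr h).mono fun U hU => norm_ne_zero_iff.1 hU
  have hlim := tendsto_integral_logDetOffset (by fun_prop)
    (fun U => posSemidef_conjTranspose_mul_self _) hne hint
  rw [← sum_harmonic_sub_harmonic h hr, ← hval]
  refine hlim.congr' ?_
  filter_upwards [Filter.eventually_gt_atTop 0] with s hs
  exact integral_logDetOffset_jacobiH hr (h.trans hr) μ hs

end HighSNR

/-- **High-SNR asymptotics of the ergodic capacity of the MIMO Jacobi fading channel.**
If `mt ≤ mr` and `mt + mr ≤ m`, then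
`C(s) − mt · ln s → − Σ_{j<mt} Σ_{k<m−mr} 1/(mr + k − j)` as `s → ∞`, where
`C(s) = E[ln det (I + s · Hᴴ H)]` with expectation over the Haar probability measure
on the unitary group `U(m)`. -/
theorem jacobi_ergodic_capacity_high_snr
    (m mt mr : ℕ) (hm : 0 < m) (hmt : 0 < mt) (hmr : 0 < mr)
    (h1 : mt ≤ mr) (h2 : mt + mr ≤ m)
    (μ : Measure (Matrix.unitaryGroup (Fin m) ℂ))
    [μ.IsHaarMeasure] [IsProbabilityMeasure μ] :
    Filter.Tendsto
      (fun s : ℝ => ergodicCapacity m mt mr (le_trans (Nat.le_add_left mr mt) h2)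
          (le_trans (Nat.le_add_right mt mr) h2) s μ - (mt : ℝ) * Real.log s)
      Filter.atTop
      (nhds (-(∑ j ∈ Finset.range mt, ∑ k ∈ Finset.range (m - mr),
          1 / ((mr : ℝ) + k - j)))) := by
  exact jacobi_ergodic_capacity_high_snr_general h1 ((Nat.le_add_left mr mt).trans h2) μ
end
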